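/- arXiv:1410.6881 — 8 statements merged into one kernel-verified Lean document; each statement's English description precedes it below -/
import Mathlib

section
/- Let (x, y, λ, μ) : [0,∞) → ℝ × ℝⁿ × ℝ × ℝⁿ be a C¹ solution of the geodesic Hamiltonian system such that x(t) > 0 for all t, the energy identity λ(t)² + ⟨G(x(t),y(t)) μ(t), μ(t)⟩ = 1 holds for all t ≥ 0, and x(t) → 0 as t → ∞. Then λ(t) → −1 and ⟨G(x(t),y(t)) μ(t), μ(t)⟩ → 0 as t → ∞. -/
open Filter Topology Set

noncomputable section

/-- The quadratic form `⟨A v, v⟩ = ∑ᵢⱼ Aᵢⱼ vᵢ vⱼ` of a matrix. -/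
def quadForm {n : ℕ} (A : Matrix (Fin n) (Fin n) ℝ) (v : Fin n → ℝ) : ℝ :=
  ∑ i, ∑ j, A i j * v i * v j

/-!
By ellipticity `⟨∂ₓG μ, μ⟩ = O(⟨G μ, μ⟩)`, so once `x` is small the equation for `λ` gives
`λ′ ≤ -⟨G μ, μ⟩ = -(1 - λ²) ≤ 0`. As `λ ≥ -1`, `λ` converges to some `L ≥ -1`, and `L² ≥ 1` because
otherwise `λ′` would stay below a negative constant. Finally `x′ / x = 2λ → 2L`, and a positive
function tending to zero cannot have a logarithmic derivative with positive limit, so `L = -1`.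
-/

section AsymptoticsFromDerivative

variable {f f' g : ℝ → ℝ} {m : ℝ}

theorem exists_antitoneOn_Ici_of_hasDerivAt_nonpos (hf : ∀ᶠ t in atTop, HasDerivAt f (f' t) t)
    (hf' : ∀ᶠ t in atTop, f' t ≤ 0) : ∃ T, AntitoneOn f (Ici T) := by
  obtain ⟨T, hT⟩ := eventually_atTop.1 (hf.and hf')
  exact ⟨T, antitoneOn_of_hasDerivWithinAt_nonpos (convex_Ici T)
    (fun t ht ↦ (hT t ht).1.continuousAt.continuousWithinAt)
    (fun t ht ↦ (hT t (interior_subset ht)).1.hasDerivWithinAt)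
    (fun t ht ↦ (hT t (interior_subset ht)).2)⟩

theorem exists_tendsto_of_hasDerivAt_nonpos (hf : ∀ᶠ t in atTop, HasDerivAt f (f' t) t)
    (hf' : ∀ᶠ t in atTop, f' t ≤ 0) (hm : ∀ᶠ t in atTop, m ≤ f t) :
    ∃ L, Tendsto f atTop (𝓝 L) := by
  obtain ⟨T, hT⟩ := exists_antitoneOn_Ici_of_hasDerivAt_nonpos hf hf'
  have hanti : Antitone fun t ↦ f (max T t) := fun s t hst ↦
    hT (le_max_left T s) (le_max_left T t) (max_le_max_left T hst)
  have heq : (fun t ↦ f (max T t)) =ᶠ[atTop] f := by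
    filter_upwards [eventually_ge_atTop T] with t ht
    rw [max_eq_right ht]
  rcases tendsto_atTop_of_antitone hanti with hbot | ⟨L, hL⟩
  · obtain ⟨t, hmt, htm⟩ := (hm.and ((hbot.congr' heq).eventually_lt_atBot m)).exists
    exact absurd hmt htm.not_ge
  · exact ⟨L, hL.congr' heq⟩

theorem tendsto_atBot_of_hasDerivAt_le (hf : ∀ᶠ t in atTop, HasDerivAt f (f' t) t)
    (hm : m < 0) (hf' : ∀ᶠ t in atTop, f' t ≤ m) : Tendsto f atTop atBot := by
  have hsub : ∀ᶠ t in atTop, HasDerivAt (fun s ↦ f s - m * s) (f' t - m) t := by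
    filter_upwards [hf] with t ht
    simpa using ht.fun_sub ((hasDerivAt_id t).const_mul m)
  obtain ⟨T, hT⟩ := exists_antitoneOn_Ici_of_hasDerivAt_nonpos hsub
    (hf'.mono fun _ ↦ sub_nonpos.2)
  have hline : Tendsto (fun t ↦ m * t + (f T - m * T)) atTop atBot :=
    tendsto_atBot_add_const_right _ _ (tendsto_id.const_mul_atTop_of_neg hm)
  refine tendsto_atBot_mono' _ ?_ hline
  filter_upwards [eventually_ge_atTop T] with t ht
  exact sub_le_iff_le_add'.1 (hT self_mem_Ici ht ht)

theorem nonneg_of_tendsto_of_hasDerivAt_le {L M : ℝ}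
    (hf : ∀ᶠ t in atTop, HasDerivAt f (f' t) t) (hf' : ∀ᶠ t in atTop, f' t ≤ g t)
    (hfL : Tendsto f atTop (𝓝 L)) (hgM : Tendsto g atTop (𝓝 M)) : 0 ≤ M := by
  by_contra! hM
  obtain ⟨m, hMm, hm⟩ := exists_between hM
  have hf'm : ∀ᶠ t in atTop, f' t ≤ m := by
    filter_upwards [hf', hgM.eventually_lt_const hMm] with t hfg hgm using hfg.trans hgm.le
  exact not_tendsto_nhds_of_tendsto_atBot (tendsto_atBot_of_hasDerivAt_le hf hm hf'm) L hfL

theorem nonpos_of_tendsto_zero_of_hasDerivAt_mul {A : ℝ} (hpos : ∀ᶠ t in atTop, 0 < f t)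
    (hf : ∀ᶠ t in atTop, HasDerivAt f (f t * g t) t) (hf0 : Tendsto f atTop (𝓝 0))
    (hgA : Tendsto g atTop (𝓝 A)) : A ≤ 0 := by
  by_contra! hA
  have hneg : ∀ᶠ t in atTop, -(f t * g t) ≤ 0 := by
    filter_upwards [hpos, hgA.eventually_const_lt hA] with t hft hgt
    exact neg_nonpos.2 (mul_pos hft hgt).le
  obtain ⟨T, hT⟩ := exists_antitoneOn_Ici_of_hasDerivAt_nonpos
    (hf.mono fun _ ht ↦ ht.neg) hneg
  obtain ⟨S, hfS, hTS⟩ := (hpos.and (eventually_ge_atTop T)).exists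
  have hle : ∀ᶠ t in atTop, f S ≤ f t := by
    filter_upwards [eventually_ge_atTop S] with t ht
    exact neg_le_neg_iff.1 (hT hTS (hTS.trans ht) ht)
  exact hfS.not_ge (ge_of_tendsto hf0 hle)

end AsymptoticsFromDerivative

theorem isBigO_quadForm_quadForm {ι : Type*} {l : Filter ι} {n : ℕ}
    {A B : ι → Matrix (Fin n) (Fin n) ℝ} {v : ι → Fin n → ℝ} {c K : ℝ} (hc : 0 < c)
    (hA : ∀ᶠ t in l, c * ∑ i, v t i ^ 2 ≤ quadForm (A t) (v t))
    (hB : ∀ᶠ t in l, |quadForm (B t) (v t)| ≤ K * ∑ i, v t i ^ 2) :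
    (fun t ↦ quadForm (B t) (v t)) =O[l] fun t ↦ quadForm (A t) (v t) := by
  have hnorm (t : ι) : ‖∑ i, v t i ^ 2‖ = ∑ i, v t i ^ 2 := Real.norm_of_nonneg (by positivity)
  have hB_sq : (fun t ↦ quadForm (B t) (v t)) =O[l] fun t ↦ ∑ i, v t i ^ 2 := by
    refine .of_bound K ?_
    simpa only [hnorm, Real.norm_eq_abs] using hB
  have hsq_A : (fun t ↦ ∑ i, v t i ^ 2) =O[l] fun t ↦ quadForm (A t) (v t) := by
    refine .of_bound c⁻¹ ?_
    filter_upwards [hA] with t hAt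
    rw [hnorm, le_inv_mul_iff₀ hc]
    exact hAt.trans (Real.le_norm_self _)
  exact hB_sq.trans hsq_A

section ReducedSystem

variable {x lam q r : ℝ → ℝ}

theorem eventually_neg_two_mul_add_mul_le_neg (hq : ∀ᶠ t in atTop, 0 ≤ q t)
    (hr : r =O[atTop] q) (hxlim : Tendsto x atTop (𝓝 0)) :
    ∀ᶠ t in atTop, -(2 * q t + x t * r t) ≤ -q t := by
  have hxr : (fun t ↦ x t * r t) =o[atTop] q := by
    simpa only [one_mul] using ((Asymptotics.isLittleO_one_iff ℝ).2 hxlim).mul_isBigO hr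
  filter_upwards [hq, hxr.bound one_pos] with t hqt hxrt
  rw [one_mul, Real.norm_eq_abs, Real.norm_of_nonneg hqt] at hxrt
  linarith [neg_le_of_abs_le hxrt]

/-- For the geodesic system, `q = ⟨G μ, μ⟩` and `r = ⟨∂ₓG μ, μ⟩`. -/
theorem stmt_0_general (hxpos : ∀ᶠ t in atTop, 0 < x t)
    (hx : ∀ᶠ t in atTop, HasDerivAt x (2 * x t * lam t) t)
    (hlam : ∀ᶠ t in atTop, HasDerivAt lam (-(2 * q t + x t * r t)) t)
    (hq : ∀ᶠ t in atTop, 0 ≤ q t) (hr : r =O[atTop] q)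
    (henergy : ∀ᶠ t in atTop, lam t ^ 2 + q t = 1) (hxlim : Tendsto x atTop (𝓝 0)) :
    Tendsto lam atTop (𝓝 (-1)) ∧ Tendsto q atTop (𝓝 0) := by
  have hlam' := eventually_neg_two_mul_add_mul_le_neg hq hr hxlim
  have hlower : ∀ᶠ t in atTop, -1 ≤ lam t := by
    filter_upwards [hq, henergy] with t hqt het
    exact (abs_le.1 ((sq_le_one_iff_abs_le_one _).1 (by linarith))).1
  obtain ⟨L, hL⟩ : ∃ L, Tendsto lam atTop (𝓝 L) := by
    refine exists_tendsto_of_hasDerivAt_nonpos hlam ?_ hlower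
    filter_upwards [hlam', hq] with t hlt hqt using hlt.trans (neg_nonpos.2 hqt)
  have hqL : Tendsto q atTop (𝓝 (1 - L ^ 2)) := by
    refine ((hL.pow 2).const_sub 1).congr' ?_
    filter_upwards [henergy] with t het using (eq_sub_of_add_eq' het).symm
  have hL_ge : -1 ≤ L := ge_of_tendsto hL hlower
  have hL_sq : 0 ≤ -(1 - L ^ 2) := nonneg_of_tendsto_of_hasDerivAt_le hlam hlam' hL hqL.neg
  have hL_nonpos : 2 * L ≤ 0 := by
    refine nonpos_of_tendsto_zero_of_hasDerivAt_mul hxpos ?_ hxlim (hL.const_mul 2)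
    filter_upwards [hx] with t ht
    convert ht using 1
    ring
  obtain rfl : L = -1 := by nlinarith
  exact ⟨hL, by simpa using hqL⟩

end ReducedSystem

/-- Along any forward-complete solution of the geodesic Hamiltonian system of an
asymptotically hyperbolic metric (in 0-cotangent coordinates) with `x > 0`, satisfying the
energy identity `λ² + ⟨Gμ,μ⟩ = 1`, and with `x(t) → 0` as `t → ∞`, one has `λ(t) → -1`
and `⟨Gμ,μ⟩(t) → 0` as `t → ∞`. -/
theorem stmt_0 (n : ℕ) (hn : 1 ≤ n)
    (G Gx : ℝ → (Fin n → ℝ) → Matrix (Fin n) (Fin n) ℝ)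
    (Gy : ℝ → (Fin n → ℝ) → Fin n → Matrix (Fin n) (Fin n) ℝ)
    (hGsymm : ∀ x y, (G x y).IsSymm)
    (c K : ℝ) (hc : 0 < c) (hK : 0 < K)
    (hell : ∀ x y (v : Fin n → ℝ), c * ∑ i, v i ^ 2 ≤ quadForm (G x y) v)
    (hGxbd : ∀ x y (v : Fin n → ℝ), |quadForm (Gx x y) v| ≤ K * ∑ i, v i ^ 2)
    (x lam : ℝ → ℝ) (y mu : ℝ → Fin n → ℝ)
    (hxpos : ∀ t : ℝ, 0 ≤ t → 0 < x t)
    (hx : ∀ t : ℝ, 0 ≤ t → HasDerivAt x (2 * x t * lam t) t)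
    (hy : ∀ t : ℝ, 0 ≤ t → ∀ i, HasDerivAt (fun s => y s i)
        (2 * x t * (G (x t) (y t)).mulVec (mu t) i) t)
    (hlam : ∀ t : ℝ, 0 ≤ t → HasDerivAt lam
        (-(2 * quadForm (G (x t) (y t)) (mu t)
            + x t * quadForm (Gx (x t) (y t)) (mu t))) t)
    (hmu : ∀ t : ℝ, 0 ≤ t → ∀ i, HasDerivAt (fun s => mu s i)
        (2 * lam t * mu t i - x t * quadForm (Gy (x t) (y t) i) (mu t)) t)
    (hchain : ∀ t : ℝ, 0 ≤ t → ∀ i j, HasDerivAt (fun s => G (x s) (y s) i j)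
        (2 * x t * lam t * Gx (x t) (y t) i j
          + ∑ k, 2 * x t * (G (x t) (y t)).mulVec (mu t) k * Gy (x t) (y t) k i j) t)
    (henergy : ∀ t : ℝ, 0 ≤ t →
        lam t ^ 2 + quadForm (G (x t) (y t)) (mu t) = 1)
    (hxlim : Tendsto x atTop (nhds 0)) :
    Tendsto lam atTop (nhds (-1)) ∧
      Tendsto (fun t => quadForm (G (x t) (y t)) (mu t)) atTop (nhds 0) := by
  have on_Ici {p : ℝ → Prop} (h : ∀ t, 0 ≤ t → p t) : ∀ᶠ t in atTop, p t :=
    (eventually_ge_atTop 0).mono h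
  have hq (t : ℝ) : 0 ≤ quadForm (G (x t) (y t)) (mu t) :=
    le_trans (by positivity) (hell (x t) (y t) (mu t))
  exact stmt_0_general (on_Ici hxpos) (on_Ici hx) (on_Ici hlam) (.of_forall hq)
    (isBigO_quadForm_quadForm hc (.of_forall fun _ ↦ hell ..) (.of_forall fun _ ↦ hGxbd ..))
    (on_Ici henergy) hxlim
end
end

section
/- Let (x, y, λ, μ) : [0,∞) → ℝ × ℝⁿ × ℝ × ℝⁿ be a C¹ solution of the geodesic Hamiltonian system such that x(t) > 0 for all t, the energy identity λ(t)² + ⟨G(x(t),y(t)) μ(t), μ(t)⟩ = 1 holds for all t ≥ 0, and x(t) → 0 as t → ∞. Then for every δ ∈ (0,1): ⟨G(x(t),y(t)) μ(t), μ(t)⟩ / x(t)^{2δ} → 0 and (1 + λ(t)) / x(t)^{2δ} → 0 as t → ∞; in particular 1 + λ(t) = O(x(t)^{2δ}) as t → ∞. -/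
open Filter Topology Set Asymptotics

noncomputable section

/-!
Everything happens in the variables `(x, λ)`. The energy identity gives `⟨Gμ,μ⟩ = 1 - λ²`, and
ellipticity bounds the `∂ₓG` term by a multiple `M` of it, so that
`x' = 2xλ` and `λ' ≤ -(2 - Mx)(1 - λ²)`.
Once `Mx ≤ 2`, `λ` decreases; it must become negative, say `λ ≤ -ε` from then on, since otherwise
`x` would not tend to `0`. From that moment `(1 + λ) x⁻² exp(ax)` with `a = M/ε` is nonincreasing:
the `x⁻²` compensates the limiting rate of decay of `1 + λ`, and the exponential absorbs the error
`Mx`. Hence `1 + λ` and `⟨Gμ,μ⟩ = (1 - λ)(1 + λ)` are `O(x²)`, and so `o(x^{2δ})` for `δ < 1`.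
-/

theorem antitoneOn_Ici_of_hasDerivAt_nonpos {f f' : ℝ → ℝ} {T : ℝ}
    (hf : ∀ t, T ≤ t → HasDerivAt f (f' t) t) (hf' : ∀ t, T ≤ t → f' t ≤ 0) :
    AntitoneOn f (Ici T) := by
  have interior_le : ∀ t ∈ interior (Ici T), T ≤ t := fun t ht => interior_subset ht
  exact antitoneOn_of_hasDerivWithinAt_nonpos (convex_Ici T)
    (fun t ht => (hf t ht).continuousAt.continuousWithinAt)
    (fun t ht => (hf t (interior_le t ht)).hasDerivWithinAt)
    (fun t ht => hf' t (interior_le t ht))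

theorem exists_hasDerivAt_neg_of_tendsto_lt {f f' : ℝ → ℝ} {T l : ℝ}
    (hf : ∀ t, T ≤ t → HasDerivAt f (f' t) t) (hlim : Tendsto f atTop (𝓝 l)) (hl : l < f T) :
    ∃ S, T ≤ S ∧ f' S < 0 := by
  by_contra! hf'
  have anti : AntitoneOn (-f) (Ici T) :=
    antitoneOn_Ici_of_hasDerivAt_nonpos (fun t ht => (hf t ht).neg)
      (fun t ht => neg_nonpos.2 (hf' t ht))
  have le_lim : f T ≤ l := by
    refine ge_of_tendsto hlim ?_
    filter_upwards [eventually_ge_atTop T] with t ht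
    exact neg_le_neg_iff.1 (anti self_mem_Ici ht ht)
  exact hl.not_ge le_lim

theorem isLittleO_rpow_rpow_nhdsGT_zero {a b : ℝ} (hab : a < b) :
    (fun x : ℝ => x ^ b) =o[𝓝[>] 0] fun x => x ^ a := by
  have pos : ∀ᶠ x : ℝ in 𝓝[>] 0, 0 < x := eventually_mem_nhdsWithin
  refine isLittleO_of_tendsto' (pos.mono fun x hx h => absurd h (Real.rpow_pos_of_pos hx a).ne') ?_
  have lim : Tendsto (fun x : ℝ => x ^ (b - a)) (𝓝[>] 0) (𝓝 0) := by
    have h := (Real.continuousAt_rpow_const 0 (b - a) (.inr (sub_pos.2 hab).le)).tendsto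
    rw [Real.zero_rpow (sub_pos.2 hab).ne'] at h
    exact h.mono_left nhdsWithin_le_nhds
  exact lim.congr' (pos.mono fun x hx => Real.rpow_sub hx b a)

theorem isLittleO_rpow_of_isBigO_sq {α : Type*} {l : Filter α} {f x : α → ℝ} {p : ℝ} (hp : p < 2)
    (hf : f =O[l] fun t => x t ^ 2) (hx : Tendsto x l (𝓝[>] 0)) :
    f =o[l] fun t => x t ^ p := by
  have sq_isLittleO := (isLittleO_rpow_rpow_nhdsGT_zero hp).comp_tendsto hx
  simp only [Function.comp_def, Real.rpow_two] at sq_isLittleO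
  exact hf.trans_isLittleO sq_isLittleO

theorem quadForm_nonneg_of_le {n : ℕ} {A : Matrix (Fin n) (Fin n) ℝ} {v : Fin n → ℝ} {c : ℝ}
    (hc : 0 ≤ c) (hA : c * ∑ i, v i ^ 2 ≤ quadForm A v) : 0 ≤ quadForm A v :=
  (mul_nonneg hc (Finset.sum_nonneg fun i _ => sq_nonneg (v i))).trans hA

theorem abs_quadForm_le_div_mul_quadForm {n : ℕ} {A B : Matrix (Fin n) (Fin n) ℝ}
    {v : Fin n → ℝ} {c K : ℝ} (hc : 0 < c) (hK : 0 ≤ K)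
    (hA : c * ∑ i, v i ^ 2 ≤ quadForm A v) (hB : |quadForm B v| ≤ K * ∑ i, v i ^ 2) :
    |quadForm B v| ≤ K / c * quadForm A v :=
  calc |quadForm B v| ≤ K * ∑ i, v i ^ 2 := hB
    _ = K / c * (c * ∑ i, v i ^ 2) := by field_simp
    _ ≤ K / c * quadForm A v := by gcongr

/-- The Lyapunov function `(1 + λ) x⁻² exp(ax)` in the variables of the reduced system
`x' = 2xλ`, `λ' ≤ -(2 - Mx)(1 - λ²)`; the parameter `a` is chosen to make it nonincreasing. -/
def lyapunov (a x lam : ℝ) : ℝ :=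
  (1 + lam) / x ^ 2 * Real.exp (a * x)

theorem hasDerivAt_lyapunov {x lam : ℝ → ℝ} {lam' a t : ℝ} (hxpos : 0 < x t)
    (hx : HasDerivAt x (2 * x t * lam t) t) (hlam : HasDerivAt lam lam' t) :
    HasDerivAt (fun s => lyapunov a (x s) (lam s))
      ((lam' + (1 + lam t) * (2 * a * x t * lam t - 4 * lam t)) / x t ^ 2 * Real.exp (a * x t))
      t := by
  have quotient := (hlam.const_add 1).fun_div (hx.fun_pow 2) (pow_pos hxpos 2).ne'
  refine (quotient.fun_mul (hx.const_mul a).exp).congr_deriv ?_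
  field_simp
  ring

theorem lyapunov_deriv_numerator_nonpos {M a x lam lam' : ℝ} (hM : 0 ≤ M) (hx : 0 ≤ x)
    (hlam_ge : -1 ≤ lam) (ha : M + a * lam ≤ 0)
    (hlam' : lam' ≤ -((2 - M * x) * (1 - lam ^ 2))) :
    lam' + (1 + lam) * (2 * a * x * lam - 4 * lam) ≤ 0 := by
  have error_absorbed : M * (1 - lam) + 2 * a * lam ≤ 0 :=
    calc M * (1 - lam) + 2 * a * lam ≤ M * 2 + 2 * a * lam := by gcongr; linarith
      _ = 2 * (M + a * lam) := by ring
      _ ≤ 0 := by linarith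
  have factor_nonpos : x * (M * (1 - lam) + 2 * a * lam) - 2 * (1 + lam) ≤ 0 := by
    linarith [mul_nonpos_of_nonneg_of_nonpos hx error_absorbed]
  calc lam' + (1 + lam) * (2 * a * x * lam - 4 * lam)
      ≤ -((2 - M * x) * (1 - lam ^ 2)) + (1 + lam) * (2 * a * x * lam - 4 * lam) := by gcongr
    _ = (1 + lam) * (x * (M * (1 - lam) + 2 * a * lam) - 2 * (1 + lam)) := by ring
    _ ≤ 0 := mul_nonpos_of_nonneg_of_nonpos (by linarith) factor_nonpos

theorem one_add_le_lyapunov_mul_sq {a x lam : ℝ} (ha : 0 ≤ a) (hx : 0 < x) (hlam : -1 ≤ lam) :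
    1 + lam ≤ lyapunov a x lam * x ^ 2 := by
  have one_le_exp : 1 ≤ Real.exp (a * x) := Real.one_le_exp (by positivity)
  calc 1 + lam ≤ (1 + lam) * Real.exp (a * x) :=
        le_mul_of_one_le_right (by linarith) one_le_exp
    _ = lyapunov a x lam * x ^ 2 := by
        unfold lyapunov
        field_simp

section ReducedSystem

variable {x lam lam' : ℝ → ℝ} {M T : ℝ}

theorem antitoneOn_lyapunov {a : ℝ} (hM : 0 ≤ M) (hxpos : ∀ t, T ≤ t → 0 < x t)
    (hx : ∀ t, T ≤ t → HasDerivAt x (2 * x t * lam t) t)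
    (hlam : ∀ t, T ≤ t → HasDerivAt lam (lam' t) t)
    (hlam' : ∀ t, T ≤ t → lam' t ≤ -((2 - M * x t) * (1 - lam t ^ 2)))
    (hlam_ge : ∀ t, T ≤ t → -1 ≤ lam t) (ha : ∀ t, T ≤ t → M + a * lam t ≤ 0) :
    AntitoneOn (fun t => lyapunov a (x t) (lam t)) (Ici T) := by
  refine antitoneOn_Ici_of_hasDerivAt_nonpos
    (fun t ht => hasDerivAt_lyapunov (hxpos t ht) (hx t ht) (hlam t ht)) fun t ht => ?_
  have numerator_nonpos :=
    lyapunov_deriv_numerator_nonpos hM (hxpos t ht).le (hlam_ge t ht) (ha t ht) (hlam' t ht)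
  exact mul_nonpos_of_nonpos_of_nonneg
    (div_nonpos_of_nonpos_of_nonneg numerator_nonpos (sq_nonneg _)) (Real.exp_pos _).le

theorem exists_pos_eventually_le_neg (hxpos : ∀ t, T ≤ t → 0 < x t)
    (hx : ∀ t, T ≤ t → HasDerivAt x (2 * x t * lam t) t)
    (hlam : ∀ t, T ≤ t → HasDerivAt lam (lam' t) t)
    (hlam' : ∀ t, T ≤ t → lam' t ≤ -((2 - M * x t) * (1 - lam t ^ 2)))
    (hlam_abs : ∀ t, T ≤ t → |lam t| ≤ 1) (hxlim : Tendsto x atTop (𝓝 0)) :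
    ∃ ε > 0, ∀ᶠ t in atTop, lam t ≤ -ε := by
  have Mx_lim : Tendsto (fun t => M * x t) atTop (𝓝 0) := by simpa using hxlim.const_mul M
  obtain ⟨R, hR⟩ := eventually_atTop.1
    ((Mx_lim.eventually_le_const two_pos).and (eventually_ge_atTop T))
  have anti : AntitoneOn lam (Ici R) := by
    refine antitoneOn_Ici_of_hasDerivAt_nonpos (fun t ht => hlam t (hR t ht).2) fun t ht => ?_
    obtain ⟨Mx_le, hTt⟩ := hR t ht
    have sq_le : lam t ^ 2 ≤ 1 := (sq_le_one_iff_abs_le_one _).2 (hlam_abs t hTt)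
    exact (hlam' t hTt).trans (neg_nonpos.2 (mul_nonneg (by linarith) (by linarith)))
  obtain ⟨S, hRS, deriv_neg⟩ : ∃ S, R ≤ S ∧ 2 * x S * lam S < 0 :=
    exists_hasDerivAt_neg_of_tendsto_lt (fun t ht => hx t (hR t ht).2) hxlim
      (hxpos R (hR R le_rfl).2)
  have lam_neg : lam S < 0 :=
    neg_of_mul_neg_right deriv_neg (mul_pos two_pos (hxpos S (hR S hRS).2)).le
  refine ⟨-lam S, neg_pos.2 lam_neg, ?_⟩
  filter_upwards [eventually_ge_atTop S] with t ht
  rw [neg_neg]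
  exact anti hRS (mem_Ici.2 (hRS.trans ht)) ht

theorem one_add_isBigO_sq (hM : 0 ≤ M) (hxpos : ∀ t, T ≤ t → 0 < x t)
    (hx : ∀ t, T ≤ t → HasDerivAt x (2 * x t * lam t) t)
    (hlam : ∀ t, T ≤ t → HasDerivAt lam (lam' t) t)
    (hlam' : ∀ t, T ≤ t → lam' t ≤ -((2 - M * x t) * (1 - lam t ^ 2)))
    (hlam_abs : ∀ t, T ≤ t → |lam t| ≤ 1) (hxlim : Tendsto x atTop (𝓝 0)) :
    (fun t => 1 + lam t) =O[atTop] fun t => x t ^ 2 := by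
  obtain ⟨ε, hε, lam_le⟩ := exists_pos_eventually_le_neg hxpos hx hlam hlam' hlam_abs hxlim
  obtain ⟨S, hS⟩ := eventually_atTop.1 (lam_le.and (eventually_ge_atTop T))
  have hTt : ∀ t, S ≤ t → T ≤ t := fun t ht => (hS t ht).2
  have lam_ge : ∀ t, S ≤ t → -1 ≤ lam t := fun t ht => (abs_le.1 (hlam_abs t (hTt t ht))).1
  have rate : ∀ t, S ≤ t → M + M / ε * lam t ≤ 0 := fun t ht =>
    calc M + M / ε * lam t ≤ M + M / ε * (-ε) := by gcongr; exact (hS t ht).1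
      _ = 0 := by field_simp; ring
  have anti : AntitoneOn (fun t => lyapunov (M / ε) (x t) (lam t)) (Ici S) :=
    antitoneOn_lyapunov hM (fun t ht => hxpos t (hTt t ht)) (fun t ht => hx t (hTt t ht))
      (fun t ht => hlam t (hTt t ht)) (fun t ht => hlam' t (hTt t ht)) lam_ge rate
  refine .of_bound (lyapunov (M / ε) (x S) (lam S)) ?_
  filter_upwards [eventually_ge_atTop S] with t ht
  rw [Real.norm_of_nonneg (by linarith [lam_ge t ht]), Real.norm_of_nonneg (sq_nonneg _)]
  calc 1 + lam t ≤ lyapunov (M / ε) (x t) (lam t) * x t ^ 2 :=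
        one_add_le_lyapunov_mul_sq (by positivity) (hxpos t (hTt t ht)) (lam_ge t ht)
    _ ≤ lyapunov (M / ε) (x S) (lam S) * x t ^ 2 := by
        gcongr
        exact anti self_mem_Ici ht ht

end ReducedSystem

-- Here `q` and `r` stand for `⟨Gμ,μ⟩` and `⟨∂ₓG μ,μ⟩` along the trajectory.
theorem stmt_1_general {x lam q r : ℝ → ℝ} {M T : ℝ} (hM : 0 ≤ M)
    (hxpos : ∀ t, T ≤ t → 0 < x t)
    (hx : ∀ t, T ≤ t → HasDerivAt x (2 * x t * lam t) t)
    (hlam : ∀ t, T ≤ t → HasDerivAt lam (-(2 * q t + x t * r t)) t)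
    (henergy : ∀ t, T ≤ t → lam t ^ 2 + q t = 1)
    (hq : ∀ t, T ≤ t → 0 ≤ q t) (hr : ∀ t, T ≤ t → -(M * q t) ≤ r t)
    (hxlim : Tendsto x atTop (𝓝 0)) :
    q =O[atTop] (fun t => x t ^ 2) ∧ (fun t => 1 + lam t) =O[atTop] fun t => x t ^ 2 := by
  have q_eq : ∀ t, T ≤ t → q t = 1 - lam t ^ 2 := fun t ht => by linarith [henergy t ht]
  have lam_abs : ∀ t, T ≤ t → |lam t| ≤ 1 := fun t ht =>
    (sq_le_one_iff_abs_le_one _).1 (by linarith [henergy t ht, hq t ht])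
  have one_add_isBigO : (fun t => 1 + lam t) =O[atTop] fun t => x t ^ 2 := by
    refine one_add_isBigO_sq hM hxpos hx hlam (fun t ht => ?_) lam_abs hxlim
    rw [← q_eq t ht]
    linarith [mul_le_mul_of_nonneg_left (hr t ht) (hxpos t ht).le]
  refine ⟨.trans (.of_bound 2 ?_) one_add_isBigO, one_add_isBigO⟩
  filter_upwards [eventually_ge_atTop T] with t ht
  have lam_ge : -1 ≤ lam t := (abs_le.1 (lam_abs t ht)).1
  rw [Real.norm_of_nonneg (hq t ht), Real.norm_of_nonneg (by linarith), q_eq t ht]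
  calc 1 - lam t ^ 2 = (1 - lam t) * (1 + lam t) := by ring
    _ ≤ 2 * (1 + lam t) := by gcongr <;> linarith

/-- Along any forward-complete solution of the geodesic Hamiltonian system of an
asymptotically hyperbolic metric (in 0-cotangent coordinates) with `x > 0`, satisfying the
energy identity and with `x(t) → 0`, for every `δ ∈ (0,1)` one has
`⟨Gμ,μ⟩/x^{2δ} → 0` and `(1+λ)/x^{2δ} → 0`; in particular `1 + λ = O(x^{2δ})`. -/
theorem stmt_1 (n : ℕ) (hn : 1 ≤ n)
    (G Gx : ℝ → (Fin n → ℝ) → Matrix (Fin n) (Fin n) ℝ)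
    (Gy : ℝ → (Fin n → ℝ) → Fin n → Matrix (Fin n) (Fin n) ℝ)
    (hGsymm : ∀ x y, (G x y).IsSymm)
    (c K : ℝ) (hc : 0 < c) (hK : 0 < K)
    (hell : ∀ x y (v : Fin n → ℝ), c * ∑ i, v i ^ 2 ≤ quadForm (G x y) v)
    (hGxbd : ∀ x y (v : Fin n → ℝ), |quadForm (Gx x y) v| ≤ K * ∑ i, v i ^ 2)
    (x lam : ℝ → ℝ) (y mu : ℝ → Fin n → ℝ)
    (hxpos : ∀ t : ℝ, 0 ≤ t → 0 < x t)
    (hx : ∀ t : ℝ, 0 ≤ t → HasDerivAt x (2 * x t * lam t) t)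
    (hy : ∀ t : ℝ, 0 ≤ t → ∀ i, HasDerivAt (fun s => y s i)
        (2 * x t * (G (x t) (y t)).mulVec (mu t) i) t)
    (hlam : ∀ t : ℝ, 0 ≤ t → HasDerivAt lam
        (-(2 * quadForm (G (x t) (y t)) (mu t)
            + x t * quadForm (Gx (x t) (y t)) (mu t))) t)
    (hmu : ∀ t : ℝ, 0 ≤ t → ∀ i, HasDerivAt (fun s => mu s i)
        (2 * lam t * mu t i - x t * quadForm (Gy (x t) (y t) i) (mu t)) t)
    (hchain : ∀ t : ℝ, 0 ≤ t → ∀ i j, HasDerivAt (fun s => G (x s) (y s) i j)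
        (2 * x t * lam t * Gx (x t) (y t) i j
          + ∑ k, 2 * x t * (G (x t) (y t)).mulVec (mu t) k * Gy (x t) (y t) k i j) t)
    (henergy : ∀ t : ℝ, 0 ≤ t →
        lam t ^ 2 + quadForm (G (x t) (y t)) (mu t) = 1)
    (hxlim : Tendsto x atTop (nhds 0)) :
    ∀ δ : ℝ, 0 < δ → δ < 1 →
      Tendsto (fun t => quadForm (G (x t) (y t)) (mu t) / x t ^ (2 * δ)) atTop (nhds 0) ∧
      Tendsto (fun t => (1 + lam t) / x t ^ (2 * δ)) atTop (nhds 0) ∧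
      (fun t => 1 + lam t) =O[atTop] fun t => x t ^ (2 * δ) := by
  intro δ _ hδ
  have x_lim : Tendsto x atTop (𝓝[>] 0) :=
    tendsto_nhdsWithin_iff.2 ⟨hxlim, (eventually_ge_atTop 0).mono hxpos⟩
  obtain ⟨q_isBigO, one_add_isBigO⟩ := stmt_1_general (div_pos hK hc).le hxpos hx hlam henergy
    (fun t _ => quadForm_nonneg_of_le hc.le (hell (x t) (y t) (mu t)))
    (fun t _ => neg_le_of_abs_le (abs_quadForm_le_div_mul_quadForm hc hK.le
      (hell (x t) (y t) (mu t)) (hGxbd (x t) (y t) (mu t)))) hxlim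
  have q_isLittleO := isLittleO_rpow_of_isBigO_sq (p := 2 * δ) (by linarith) q_isBigO x_lim
  have one_add_isLittleO :=
    isLittleO_rpow_of_isBigO_sq (p := 2 * δ) (by linarith) one_add_isBigO x_lim
  exact ⟨q_isLittleO.tendsto_div_nhds_zero, one_add_isLittleO.tendsto_div_nhds_zero,
    one_add_isLittleO.isBigO⟩
end
end

section
/- At every point (x,y,ξ,η) ∈ ℝ × ℝⁿ × ℝ × ℝⁿ with x > 0 and p̃(x,y,ξ,η) = 0, the Hamiltonian vector field satisfies H_{p̃}(x,y,ξ,η) = x · V(x,y,ξ,η), where V(x,y,ξ,η) = (2xξ − 2, 2x G(x,y)η, −ξ² − ⟨G(x,y)η,η⟩ − x⟨∂ₓG(x,y)η,η⟩, (−x⟨∂_{yᵢ}G(x,y)η,η⟩)ᵢ). In particular V is a C⁰ (indeed as smooth as G) vector field on all of ℝ × ℝⁿ × ℝ × ℝⁿ whose ∂/∂x-component at x = 0 equals −2; hence the rescaled Hamilton vector field x⁻¹H_{p̃}, restricted to {p̃ = 0, x > 0}, extends across and is transverse to the boundary {x = 0}. -/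
open Filter Topology Set

noncomputable section

/-! Differentiating `p̃ = (xξ)² − 2xξ + x²⟨Gη, η⟩` in `ξ`, `η` or `y` leaves a factor `x` in front
of everything. The `x`-derivative does not have this factor, but it exceeds `−x` times the
corresponding component of `V` by exactly `xξ² − 2ξ + x⟨Gη, η⟩ = p̃ / x`, which vanishes on the
characteristic variety. So `H_{p̃} = x V − (p̃ / x) ∂_ξ` wherever `x ≠ 0`. -/

section QuadForm

variable {n : ℕ}

theorem quadForm_eq_dotProduct_mulVec (A : Matrix (Fin n) (Fin n) ℝ) (v : Fin n → ℝ) :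
    quadForm A v = v ⬝ᵥ A.mulVec v := by
  simp only [quadForm, dotProduct, Matrix.mulVec, Finset.mul_sum]
  exact Finset.sum_congr rfl fun i _ => Finset.sum_congr rfl fun j _ => by ring

theorem continuous_quadForm :
    Continuous fun q : Matrix (Fin n) (Fin n) ℝ × (Fin n → ℝ) => quadForm q.1 q.2 := by
  simp only [quadForm_eq_dotProduct_mulVec]
  exact continuous_snd.dotProduct (continuous_fst.matrix_mulVec continuous_snd)

theorem hasDerivAt_quadForm {A : ℝ → Matrix (Fin n) (Fin n) ℝ} {A' : Matrix (Fin n) (Fin n) ℝ}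
    {v : ℝ → Fin n → ℝ} {v' : Fin n → ℝ} {t : ℝ}
    (hA : ∀ i j, HasDerivAt (fun s => A s i j) (A' i j) t) (hv : HasDerivAt v v' t) :
    HasDerivAt (fun s => quadForm (A s) (v s))
      (quadForm A' (v t) + v' ⬝ᵥ (A t).mulVec (v t) + v t ⬝ᵥ (A t).mulVec v') t := by
  have hv_apply := hasDerivAt_pi.1 hv
  have hsum := HasDerivAt.fun_sum fun i (_ : i ∈ Finset.univ) =>
    HasDerivAt.fun_sum fun j (_ : j ∈ Finset.univ) =>
      ((hA i j).fun_mul (hv_apply i)).fun_mul (hv_apply j)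
  refine hsum.congr_deriv ?_
  simp only [quadForm, dotProduct, Matrix.mulVec, Finset.mul_sum, ← Finset.sum_add_distrib]
  exact Finset.sum_congr rfl fun i _ => Finset.sum_congr rfl fun j _ => by ring

theorem hasDerivAt_quadForm_matrix {A : ℝ → Matrix (Fin n) (Fin n) ℝ}
    {A' : Matrix (Fin n) (Fin n) ℝ} {t : ℝ}
    (hA : ∀ i j, HasDerivAt (fun s => A s i j) (A' i j) t) (v : Fin n → ℝ) :
    HasDerivAt (fun s => quadForm (A s) v) (quadForm A' v) t := by
  simpa using hasDerivAt_quadForm hA (hasDerivAt_const t v)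

theorem hasDerivAt_quadForm_update {A : Matrix (Fin n) (Fin n) ℝ} (hA : A.IsSymm)
    (v : Fin n → ℝ) (k : Fin n) :
    HasDerivAt (fun s => quadForm A (Function.update v k s)) (2 * A.mulVec v k) (v k) := by
  have hquad := hasDerivAt_quadForm (A := fun _ => A) (A' := 0)
    (fun i j => hasDerivAt_const (v k) (A i j)) (hasDerivAt_update v k (v k))
  have hvecMul : Matrix.vecMul v A = A.mulVec v := by
    rw [← Matrix.mulVec_transpose, hA.eq]
  refine hquad.congr_deriv ?_
  rw [Function.update_eq_self, Matrix.dotProduct_mulVec v, hvecMul, single_one_dotProduct,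
    dotProduct_single_one, quadForm_eq_dotProduct_mulVec, Matrix.zero_mulVec, dotProduct_zero]
  ring

end QuadForm

section HamiltonField

variable {n : ℕ}

/-- The vector `w = (∂p/∂ξ, ∂p/∂η, −∂p/∂x, −∂p/∂y)` is the Hamilton vector of `p` at
`(x, y, ξ, η)`. Only the existence of the partial derivatives is required, not joint
differentiability of `p`. -/
def HasHamiltonVectorAt (p : ℝ → (Fin n → ℝ) → ℝ → (Fin n → ℝ) → ℝ)
    (w : ℝ × (Fin n → ℝ) × ℝ × (Fin n → ℝ)) (x : ℝ) (y : Fin n → ℝ) (ξ : ℝ) (η : Fin n → ℝ) :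
    Prop :=
  HasDerivAt (fun s => p x y s η) w.1 ξ ∧
  (∀ i, HasDerivAt (fun s => p x y ξ (Function.update η i s)) (w.2.1 i) (η i)) ∧
  HasDerivAt (fun s => p s y ξ η) (-w.2.2.1) x ∧
  ∀ i, HasDerivAt (fun s => p x (Function.update y i s) ξ η) (-w.2.2.2 i) (y i)

/-- The shifted semiclassical Hamiltonian `p̃` of the inverse boundary metric `G`. -/
def shiftedSymbol (G : ℝ → (Fin n → ℝ) → Matrix (Fin n) (Fin n) ℝ)
    (x : ℝ) (y : Fin n → ℝ) (ξ : ℝ) (η : Fin n → ℝ) : ℝ :=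
  (x * ξ) ^ 2 - 2 * (x * ξ) + x ^ 2 * quadForm (G x y) η

/-- The vector field `V` extending `x⁻¹ H_{p̃}` from the characteristic variety of `p̃` across
`x = 0`. The arguments `Gx` and `Gy · · k` stand for the partial derivatives `∂ₓG` and `∂_{yₖ}G`. -/
def rescaledHamiltonField (G Gx : ℝ → (Fin n → ℝ) → Matrix (Fin n) (Fin n) ℝ)
    (Gy : ℝ → (Fin n → ℝ) → Fin n → Matrix (Fin n) (Fin n) ℝ)
    (x : ℝ) (y : Fin n → ℝ) (ξ : ℝ) (η : Fin n → ℝ) : ℝ × (Fin n → ℝ) × ℝ × (Fin n → ℝ) :=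
  (2 * x * ξ - 2,
   fun i => 2 * x * (G x y).mulVec η i,
   -ξ ^ 2 - quadForm (G x y) η - x * quadForm (Gx x y) η,
   fun i => -(x * quadForm (Gy x y i) η))

variable {G Gx : ℝ → (Fin n → ℝ) → Matrix (Fin n) (Fin n) ℝ}
  {Gy : ℝ → (Fin n → ℝ) → Fin n → Matrix (Fin n) (Fin n) ℝ}
  {x : ℝ} {y : Fin n → ℝ}

theorem hasDerivAt_shiftedSymbol_ξ (G : ℝ → (Fin n → ℝ) → Matrix (Fin n) (Fin n) ℝ)
    (x : ℝ) (y : Fin n → ℝ) (ξ : ℝ) (η : Fin n → ℝ) :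
    HasDerivAt (fun s => shiftedSymbol G x y s η) (x * (2 * x * ξ - 2)) ξ := by
  have hmul : HasDerivAt (fun s => x * s) x ξ := hasDerivAt_const_mul x
  refine (((hmul.fun_pow 2).fun_sub (hmul.const_mul 2)).add_const
    (x ^ 2 * quadForm (G x y) η)).congr_deriv ?_
  push_cast
  ring

theorem hasDerivAt_shiftedSymbol_η (hG : (G x y).IsSymm) (ξ : ℝ) (η : Fin n → ℝ) (i : Fin n) :
    HasDerivAt (fun s => shiftedSymbol G x y ξ (Function.update η i s))
      (x * (2 * x * (G x y).mulVec η i)) (η i) := by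
  refine (((hasDerivAt_quadForm_update hG η i).const_mul (x ^ 2)).const_add
    ((x * ξ) ^ 2 - 2 * (x * ξ))).congr_deriv ?_
  ring

theorem hasDerivAt_shiftedSymbol_x {G' : Matrix (Fin n) (Fin n) ℝ}
    (hG : ∀ i j, HasDerivAt (fun s => G s y i j) (G' i j) x) (hx : x ≠ 0)
    (ξ : ℝ) (η : Fin n → ℝ) :
    HasDerivAt (fun s => shiftedSymbol G s y ξ η)
      (x * (ξ ^ 2 + quadForm (G x y) η + x * quadForm G' η) + shiftedSymbol G x y ξ η / x) x := by
  have hmul : HasDerivAt (fun s => s * ξ) ξ x := hasDerivAt_mul_const ξ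
  have hquad := ((hasDerivAt_id' x).fun_pow 2).fun_mul (hasDerivAt_quadForm_matrix hG η)
  refine (((hmul.fun_pow 2).fun_sub (hmul.const_mul 2)).fun_add hquad).congr_deriv ?_
  have hdiv : shiftedSymbol G x y ξ η / x = x * ξ ^ 2 - 2 * ξ + x * quadForm (G x y) η := by
    rw [shiftedSymbol]
    field_simp
  rw [hdiv]
  push_cast
  ring

theorem hasDerivAt_shiftedSymbol_y {G' : Matrix (Fin n) (Fin n) ℝ} {k : Fin n}
    (hG : ∀ i j, HasDerivAt (fun s => G x (Function.update y k s) i j) (G' i j) (y k))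
    (ξ : ℝ) (η : Fin n → ℝ) :
    HasDerivAt (fun s => shiftedSymbol G x (Function.update y k s) ξ η)
      (x * (x * quadForm G' η)) (y k) := by
  refine (((hasDerivAt_quadForm_matrix hG η).const_mul (x ^ 2)).const_add
    ((x * ξ) ^ 2 - 2 * (x * ξ))).congr_deriv ?_
  ring

theorem hasHamiltonVectorAt_shiftedSymbol (hsymm : (G x y).IsSymm)
    (hGx : ∀ i j, HasDerivAt (fun s => G s y i j) (Gx x y i j) x)
    (hGy : ∀ k i j, HasDerivAt (fun s => G x (Function.update y k s) i j) (Gy x y k i j) (y k))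
    (hx : x ≠ 0) (ξ : ℝ) (η : Fin n → ℝ) :
    HasHamiltonVectorAt (shiftedSymbol G)
      (x • rescaledHamiltonField G Gx Gy x y ξ η - (0, 0, shiftedSymbol G x y ξ η / x, 0))
      x y ξ η := by
  refine ⟨(hasDerivAt_shiftedSymbol_ξ G x y ξ η).congr_deriv (by simp [rescaledHamiltonField]),
    fun i => (hasDerivAt_shiftedSymbol_η hsymm ξ η i).congr_deriv
      (by simp [rescaledHamiltonField]),
    (hasDerivAt_shiftedSymbol_x hGx hx ξ η).congr_deriv ?_,
    fun k => (hasDerivAt_shiftedSymbol_y (hGy k) ξ η).congr_deriv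
      (by simp [rescaledHamiltonField])⟩
  simp only [rescaledHamiltonField, Prod.snd_sub, Prod.fst_sub, Prod.smul_snd, Prod.smul_fst,
    smul_eq_mul]
  ring

theorem continuous_rescaledHamiltonField
    (hG : Continuous fun p : ℝ × (Fin n → ℝ) => G p.1 p.2)
    (hGx : Continuous fun p : ℝ × (Fin n → ℝ) => Gx p.1 p.2)
    (hGy : ∀ k, Continuous fun p : ℝ × (Fin n → ℝ) => Gy p.1 p.2 k) :
    Continuous fun q : ℝ × (Fin n → ℝ) × ℝ × (Fin n → ℝ) =>
      rescaledHamiltonField G Gx Gy q.1 q.2.1 q.2.2.1 q.2.2.2 := by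
  have hbase : Continuous fun q : ℝ × (Fin n → ℝ) × ℝ × (Fin n → ℝ) => (q.1, q.2.1) := by
    fun_prop
  have hη : Continuous fun q : ℝ × (Fin n → ℝ) × ℝ × (Fin n → ℝ) => q.2.2.2 := by
    fun_prop
  have hquad {A : ℝ → (Fin n → ℝ) → Matrix (Fin n) (Fin n) ℝ}
      (hA : Continuous fun p : ℝ × (Fin n → ℝ) => A p.1 p.2) :
      Continuous fun q : ℝ × (Fin n → ℝ) × ℝ × (Fin n → ℝ) =>
        quadForm (A q.1 q.2.1) q.2.2.2 :=
    continuous_quadForm.comp ((hA.comp hbase).prodMk hη)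
  have hmulVec : Continuous fun q : ℝ × (Fin n → ℝ) × ℝ × (Fin n → ℝ) =>
      (G q.1 q.2.1).mulVec q.2.2.2 :=
    (hG.comp hbase).matrix_mulVec hη
  refine .prodMk (by fun_prop) (.prodMk ?_ (.prodMk ?_ ?_))
  · exact continuous_pi fun i =>
      (continuous_const.mul continuous_fst).mul ((continuous_apply i).comp hmulVec)
  · exact ((continuous_snd.snd.fst.pow 2).neg.sub (hquad hG)).sub (continuous_fst.mul (hquad hGx))
  · exact continuous_pi fun k =>
      (continuous_fst.mul (hquad (A := fun x y => Gy x y k) (hGy k))).neg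

theorem rescaledHamiltonField_zero_fst (G Gx : ℝ → (Fin n → ℝ) → Matrix (Fin n) (Fin n) ℝ)
    (Gy : ℝ → (Fin n → ℝ) → Fin n → Matrix (Fin n) (Fin n) ℝ)
    (y : Fin n → ℝ) (ξ : ℝ) (η : Fin n → ℝ) :
    (rescaledHamiltonField G Gx Gy 0 y ξ η).1 = -2 := by
  simp [rescaledHamiltonField]

end HamiltonField

theorem stmt_4_general {n : ℕ} {G Gx : ℝ → (Fin n → ℝ) → Matrix (Fin n) (Fin n) ℝ}
    {Gy : ℝ → (Fin n → ℝ) → Fin n → Matrix (Fin n) (Fin n) ℝ}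
    (hGsymm : ∀ x y, (G x y).IsSymm)
    (hGx : ∀ x y i j, HasDerivAt (fun s => G s y i j) (Gx x y i j) x)
    (hGy : ∀ x y k i j,
      HasDerivAt (fun s => G x (Function.update y k s) i j) (Gy x y k i j) (y k))
    (hGc : Continuous fun p : ℝ × (Fin n → ℝ) => G p.1 p.2)
    (hGxc : Continuous fun p : ℝ × (Fin n → ℝ) => Gx p.1 p.2)
    (hGyc : ∀ k, Continuous fun p : ℝ × (Fin n → ℝ) => Gy p.1 p.2 k) :
    (∀ x y ξ η, x ≠ 0 →
      HasHamiltonVectorAt (shiftedSymbol G)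
        (x • rescaledHamiltonField G Gx Gy x y ξ η - (0, 0, shiftedSymbol G x y ξ η / x, 0))
        x y ξ η)
    ∧ Continuous (fun q : ℝ × (Fin n → ℝ) × ℝ × (Fin n → ℝ) =>
        rescaledHamiltonField G Gx Gy q.1 q.2.1 q.2.2.1 q.2.2.2)
    ∧ ∀ y ξ η, (rescaledHamiltonField G Gx Gy 0 y ξ η).1 = -2 :=
  ⟨fun x y ξ η hx =>
      hasHamiltonVectorAt_shiftedSymbol (hGsymm x y) (hGx x y) (hGy x y) hx ξ η,
    continuous_rescaledHamiltonField hGc hGxc hGyc,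
    rescaledHamiltonField_zero_fst G Gx Gy⟩

/-- On the shifted characteristic variety `{p̃ = 0, x > 0}` of the shifted semiclassical
Hamiltonian `p̃ = (xξ)² − 2xξ + x²⟨G(x,y)η,η⟩`, the Hamilton vector field factors as
`H_{p̃} = x · V` with `V` a continuous vector field on all of ℝ × ℝⁿ × ℝ × ℝⁿ whose
`∂/∂x`-component at `x = 0` equals `−2`; hence `x⁻¹H_{p̃}` extends across and is transverse
to the boundary `{x = 0}`. -/
theorem stmt_4 (n : ℕ) (hn : 1 ≤ n)
    (G Gx : ℝ → (Fin n → ℝ) → Matrix (Fin n) (Fin n) ℝ)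
    (Gy : ℝ → (Fin n → ℝ) → Fin n → Matrix (Fin n) (Fin n) ℝ)
    (hGsymm : ∀ x y, (G x y).IsSymm)
    (hGx : ∀ x y i j, HasDerivAt (fun s => G s y i j) (Gx x y i j) x)
    (hGy : ∀ (x : ℝ) (y : Fin n → ℝ) (k i j : Fin n),
        HasDerivAt (fun v => G x (Function.update y k v) i j) (Gy x y k i j) (y k))
    (hGc : Continuous fun p : ℝ × (Fin n → ℝ) => G p.1 p.2)
    (hGxc : Continuous fun p : ℝ × (Fin n → ℝ) => Gx p.1 p.2)
    (hGyc : ∀ k, Continuous fun p : ℝ × (Fin n → ℝ) => Gy p.1 p.2 k)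
    (pt : ℝ → (Fin n → ℝ) → ℝ → (Fin n → ℝ) → ℝ)
    (hpt : ∀ x y ξ η, pt x y ξ η = (x * ξ) ^ 2 - 2 * (x * ξ) + x ^ 2 * quadForm (G x y) η)
    (V : ℝ → (Fin n → ℝ) → ℝ → (Fin n → ℝ) → ℝ × (Fin n → ℝ) × ℝ × (Fin n → ℝ))
    (hV : ∀ x y ξ η, V x y ξ η =
      (2 * x * ξ - 2,
       fun i => 2 * x * (G x y).mulVec η i,
       -ξ ^ 2 - quadForm (G x y) η - x * quadForm (Gx x y) η,
       fun i => -(x * quadForm (Gy x y i) η))) :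
    (∀ (x : ℝ) (y : Fin n → ℝ) (ξ : ℝ) (η : Fin n → ℝ), 0 < x → pt x y ξ η = 0 →
      HasDerivAt (fun s => pt x y s η) (x * (V x y ξ η).1) ξ ∧
      (∀ i, HasDerivAt (fun v => pt x y ξ (Function.update η i v))
        (x * (V x y ξ η).2.1 i) (η i)) ∧
      HasDerivAt (fun s => pt s y ξ η) (-(x * (V x y ξ η).2.2.1)) x ∧
      (∀ i, HasDerivAt (fun v => pt x (Function.update y i v) ξ η)
        (-(x * (V x y ξ η).2.2.2 i)) (y i)))
    ∧ Continuous (fun q : ℝ × (Fin n → ℝ) × ℝ × (Fin n → ℝ) => V q.1 q.2.1 q.2.2.1 q.2.2.2)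
    ∧ (∀ (y : Fin n → ℝ) (ξ : ℝ) (η : Fin n → ℝ), (V 0 y ξ η).1 = -2) := by
  obtain rfl : pt = shiftedSymbol G := by funext x y ξ η; exact hpt x y ξ η
  obtain rfl : V = rescaledHamiltonField G Gx Gy := by funext x y ξ η; exact hV x y ξ η
  obtain ⟨hham, hcont, htransverse⟩ := stmt_4_general hGsymm hGx hGy hGc hGxc hGyc
  refine ⟨fun x y ξ η hx hchar => ?_, hcont, htransverse⟩
  simpa [HasHamiltonVectorAt, hchar] using hham x y ξ η hx.ne'
end
end

section
/- Let n ≥ 1 and let M : [0, r₀) → (n+1)×(n+1) real matrices be a C¹ family. Write the columns of M(r) as v(r), C₁(r), …, Cₙ(r), assume C₁(0) = ⋯ = Cₙ(0) = 0, and assume the matrix with columns v(0), C₁′(0), …, Cₙ′(0) is invertible. Then there exist constants c, C > 0 and r₁ ∈ (0, r₀) such that c·rⁿ ≤ |det M(r)| ≤ C·rⁿ for all r ∈ (0, r₁). -/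
open Filter Topology Set

noncomputable section

/-!
Divide each column that vanishes at the base point by the parameter. By multilinearity this takes a
power of the parameter out of the determinant, and the divided columns are difference quotients, so
the remaining determinant tends to that of the matrix of limiting columns, which is nonzero.
-/

open Asymptotics Matrix

section SlopeColumns

variable {𝕜 R κ ι : Type*} [DecidableEq ι]

/-- The family `M` with the columns indexed by `J` replaced by their difference quotients at `a`:
a rescaling that can have an invertible limit as `r → a` although those columns of `M` vanish at `a`.
At `r = a` these columns are `0`, the value of `slope` at coinciding points. -/
def slopeColumns [Field 𝕜] [AddCommGroup R] [Module 𝕜 R] (M : 𝕜 → Matrix κ ι R) (J : Finset ι)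
    (a r : 𝕜) : Matrix κ ι R :=
  of fun i j => if j ∈ J then slope (fun s => M s i j) a r else M r i j

variable {J : Finset ι} {a : 𝕜}

theorem det_eq_pow_smul_det_slopeColumns [Fintype ι] [Field 𝕜] [CommRing R] [Algebra 𝕜 R]
    {M : 𝕜 → Matrix ι ι R} (hzero : ∀ i, ∀ j ∈ J, M a i j = 0) (r : 𝕜) :
    (M r).det = (r - a) ^ J.card • (slopeColumns M J a r).det := by
  have hscale : M r =
      of fun i j => (if j ∈ J then algebraMap 𝕜 R (r - a) else 1) * slopeColumns M J a r i j := by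
    ext i j
    by_cases hj : j ∈ J
    · simp [slopeColumns, hj, ← Algebra.smul_def, -map_sub, sub_smul_slope, hzero i j hj]
    · simp [slopeColumns, hj]
  rw [hscale, det_mul_row, Finset.prod_ite_mem, Finset.univ_inter, Finset.prod_const, ← map_pow,
    ← Algebra.smul_def]

variable [NontriviallyNormedField 𝕜] {s : Set 𝕜}

theorem tendsto_slopeColumns [NormedAddCommGroup R] [NormedSpace 𝕜 R]
    {M : 𝕜 → Matrix κ ι R} {M' : Matrix κ ι R}
    (hcont : ∀ i, ∀ j ∉ J, ContinuousWithinAt (fun r => M r i j) s a)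
    (hderiv : ∀ i, ∀ j ∈ J, HasDerivWithinAt (fun r => M r i j) (M' i j) s a) :
    Tendsto (slopeColumns M J a) (𝓝[s \ {a}] a)
      (𝓝 (of fun i j => if j ∈ J then M' i j else M a i j)) := by
  refine tendsto_pi_nhds.2 fun i => tendsto_pi_nhds.2 fun j => ?_
  by_cases hj : j ∈ J
  · simpa [slopeColumns, hj] using hasDerivWithinAt_iff_tendsto_slope.1 (hderiv i j hj)
  · simpa [slopeColumns, hj] using (hcont i j hj).mono_left (nhdsWithin_mono a sdiff_subset)

theorem isTheta_det_pow_card [Fintype ι] [NormedCommRing R] [NormedAlgebra 𝕜 R]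
    {M : 𝕜 → Matrix ι ι R} {M' : Matrix ι ι R}
    (hcont : ∀ i, ∀ j ∉ J, ContinuousWithinAt (fun r => M r i j) s a)
    (hderiv : ∀ i, ∀ j ∈ J, HasDerivWithinAt (fun r => M r i j) (M' i j) s a)
    (hzero : ∀ i, ∀ j ∈ J, M a i j = 0)
    (hdet : (of fun i j => if j ∈ J then M' i j else M a i j).det ≠ 0) :
    (fun r => (M r).det) =Θ[𝓝[s \ {a}] a] fun r => (r - a) ^ J.card := by
  have hlim := ((continuous_id.matrix_det).tendsto _).comp (tendsto_slopeColumns hcont hderiv)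
  have hone : (fun r => (slopeColumns M J a r).det) =Θ[𝓝[s \ {a}] a] fun _ => (1 : 𝕜) :=
    ((isEquivalent_const_iff_tendsto hdet).2 hlim).isTheta.trans
      (isTheta_const_const hdet one_ne_zero)
  simpa [det_eq_pow_smul_det_slopeColumns hzero] using
    (isTheta_refl (fun r => (r - a) ^ J.card) _).smul hone

end SlopeColumns

theorem exists_bounds_of_isTheta_nhdsGT {E F : Type*} [SeminormedAddCommGroup E]
    [SeminormedAddCommGroup F] {f : ℝ → E} {g : ℝ → F} {a b : ℝ} (hab : a < b)
    (hfg : f =Θ[𝓝[>] a] g) :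
    ∃ c C r₁ : ℝ, 0 < c ∧ 0 < C ∧ a < r₁ ∧ r₁ < b ∧
      ∀ r : ℝ, a < r → r < r₁ → c * ‖g r‖ ≤ ‖f r‖ ∧ ‖f r‖ ≤ C * ‖g r‖ := by
  obtain ⟨C, hC, hupper⟩ := hfg.1.exists_pos
  obtain ⟨D, hD, hlower⟩ := hfg.2.exists_pos
  obtain ⟨u, hu, hbounds⟩ :=
    mem_nhdsGT_iff_exists_Ioo_subset.1 (hlower.bound.and hupper.bound)
  obtain ⟨r₁, har₁, hr₁⟩ := exists_between (lt_min hu hab)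
  refine ⟨D⁻¹, C, r₁, inv_pos.2 hD, hC, har₁, hr₁.trans_le (min_le_right u b),
    fun r har hrr₁ => ?_⟩
  obtain ⟨hg, hf⟩ := hbounds ⟨har, hrr₁.trans (hr₁.trans_le (min_le_left u b))⟩
  exact ⟨(inv_mul_le_iff₀ hD).2 hg, hf⟩

theorem stmt_6_general {R ι : Type*} [NormedCommRing R] [NormedAlgebra ℝ R] [Fintype ι]
    [DecidableEq ι] {J : Finset ι} {r₀ : ℝ} (hr₀ : 0 < r₀) {M : ℝ → Matrix ι ι R}
    {M' : Matrix ι ι R}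
    (hcont : ∀ i, ∀ j ∉ J, ContinuousWithinAt (fun r => M r i j) (Ico 0 r₀) 0)
    (hderiv : ∀ i, ∀ j ∈ J, HasDerivWithinAt (fun r => M r i j) (M' i j) (Ico 0 r₀) 0)
    (hzero : ∀ i, ∀ j ∈ J, M 0 i j = 0)
    (hdet : (of fun i j => if j ∈ J then M' i j else M 0 i j).det ≠ 0) :
    ∃ c C r₁ : ℝ, 0 < c ∧ 0 < C ∧ 0 < r₁ ∧ r₁ < r₀ ∧
      ∀ r : ℝ, 0 < r → r < r₁ →
        c * r ^ J.card ≤ ‖(M r).det‖ ∧ ‖(M r).det‖ ≤ C * r ^ J.card := by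
  have htheta : (fun r => (M r).det) =Θ[𝓝[>] 0] fun r : ℝ => r ^ J.card := by
    simpa [Ico_sdiff_left, nhdsWithin_Ioo_eq_nhdsGT hr₀] using
      isTheta_det_pow_card hcont hderiv hzero hdet
  obtain ⟨c, C, r₁, hc, hC, hr₁, hr₁r₀, hbounds⟩ := exists_bounds_of_isTheta_nhdsGT hr₀ htheta
  refine ⟨c, C, r₁, hc, hC, hr₁, hr₁r₀, fun r hr hrr₁ => ?_⟩
  simpa [abs_of_pos hr] using hbounds r hr hrr₁

/-- Quantitative rank-drop estimate: if `M : [0, r₀) → Mat_{(n+1)×(n+1)}(ℝ)` is a C¹ family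
whose columns are `v(r), C₁(r), …, Cₙ(r)` with `Cⱼ(0) = 0` and with the matrix having
columns `v(0), C₁′(0), …, Cₙ′(0)` invertible, then `|det M(r)| ≍ rⁿ` for small `r > 0`. -/
theorem stmt_6 (n : ℕ) (hn : 1 ≤ n) (r₀ : ℝ) (hr₀ : 0 < r₀)
    (M M' : ℝ → Matrix (Fin (n + 1)) (Fin (n + 1)) ℝ)
    (hderiv : ∀ r ∈ Set.Ico (0 : ℝ) r₀, ∀ i j,
        HasDerivWithinAt (fun s => M s i j) (M' r i j) (Set.Ico (0 : ℝ) r₀) r)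
    (hcont : ∀ i j, ContinuousOn (fun r => M' r i j) (Set.Ico (0 : ℝ) r₀))
    (hcol0 : ∀ (i : Fin (n + 1)) (j : Fin n), M 0 i j.succ = 0)
    (hinv : (Matrix.of fun i j : Fin (n + 1) =>
        if j = 0 then M 0 i j else M' 0 i j).det ≠ 0) :
    ∃ c C r₁ : ℝ, 0 < c ∧ 0 < C ∧ 0 < r₁ ∧ r₁ < r₀ ∧
      ∀ r : ℝ, 0 < r → r < r₁ →
        c * r ^ n ≤ |(M r).det| ∧ |(M r).det| ≤ C * r ^ n := by
  have hzero_mem : (0 : ℝ) ∈ Ico 0 r₀ := left_mem_Ico.2 hr₀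
  have hcols : ∀ i, ∀ j ∈ ({0}ᶜ : Finset (Fin (n + 1))), M 0 i j = 0 := by
    simpa [Fin.forall_fin_succ (n := n)] using hcol0
  simpa [Finset.card_compl] using stmt_6_general (J := {0}ᶜ) hr₀
    (fun i j _ => (hderiv 0 hzero_mem i j).continuousWithinAt)
    (fun i j _ => hderiv 0 hzero_mem i j)
    hcols (by simpa using hinv)
end
end

section
/- Let r₀ ∈ (0, π) and let a, b : [0, π] → ℝ be C¹ functions with a(0) = b(0) = r₀ satisfying a′(t) = sin(a(t)/2)·cos(b(t)/2) and b′(t) = −sin(a(t)/2)·cos(b(t)/2) for all t ∈ [0, π]. Then there exists t ∈ [0, π] with a(t) ≥ π or b(t) ≤ 0. (In particular, every such flow line exits the model region {0 < b ≤ a < π} within the uniformly bounded time π.) -/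
open Filter Topology Set

noncomputable section

/-!
The sum `a + b` is conserved, so with `s = (a 0 + b 0) / 2` the speed is
`sin (a / 2) cos (b / 2) = (sin s + sin ((a - b) / 2)) / 2`. While `0 ≤ b ≤ a ≤ π`,
this is at least `sin s / 2`; in particular `a` increases, so `b ≤ a` persists. Hence
`a π - a 0 ≥ (π / 2) sin s ≥ min s (π - s)` by Jordan's inequality, which is just enough for `a`
to reach `π` or for `b = 2 s - a` to reach `0`.
-/

theorem two_div_pi_mul_min_le_sin {x : ℝ} (hx₀ : 0 ≤ x) (hxπ : x ≤ Real.pi) :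
    2 / Real.pi * min x (Real.pi - x) ≤ Real.sin x := by
  rcases le_total x (Real.pi / 2) with hx | hx
  · rw [min_eq_left (by linarith)]
    exact Real.mul_le_sin hx₀ hx
  · rw [min_eq_right (by linarith), ← Real.sin_pi_sub]
    exact Real.mul_le_sin (by linarith) (by linarith)

theorem sin_half_mul_cos_half (x y : ℝ) :
    Real.sin (x / 2) * Real.cos (y / 2) =
      (Real.sin ((x + y) / 2) + Real.sin ((x - y) / 2)) / 2 := by
  rw [add_div x, sub_div x]
  linarith [Real.two_mul_sin_mul_cos (x / 2) (y / 2)]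

section DerivativeBounds

variable {f f' : ℝ → ℝ} {u v m : ℝ}

theorem left_le_of_deriv_pos_of_eq_left
    (hf : ∀ t ∈ Icc u v, HasDerivWithinAt f (f' t) (Icc u v) t)
    (hpos : ∀ t ∈ Ico u v, f t = f u → 0 < f' t) :
    ∀ t ∈ Icc u v, f u ≤ f t := by
  intro t ht
  refine image_le_of_deriv_right_lt_deriv_boundary' (f := fun _ => f u) (f' := fun _ => 0)
    continuousOn_const (fun _ _ => hasDerivWithinAt_const _ _ _) le_rfl
    (HasDerivWithinAt.continuousOn hf) (fun x hx => ?_)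
    (fun x hx hfx => hpos x hx hfx.symm) ht
  exact (hf x (Ico_subset_Icc_self hx)).mono_of_mem_nhdsWithin (Icc_mem_nhdsGE_of_mem hx)

theorem add_mul_sub_le_of_le_deriv_of_left_le (hm : 0 < m)
    (hf : ∀ t ∈ Icc u v, HasDerivWithinAt f (f' t) (Icc u v) t)
    (hbound : ∀ t ∈ Ico u v, f u ≤ f t → m ≤ f' t) :
    ∀ t ∈ Icc u v, f u + m * (t - u) ≤ f t := by
  intro t ht
  have hleft : ∀ x ∈ Icc u v, f u ≤ f x :=
    left_le_of_deriv_pos_of_eq_left hf fun x hx hfx => hm.trans_le (hbound x hx hfx.ge)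
  have hderiv : ∀ x ∈ Ioo u v, HasDerivAt f (f' x) x := fun x hx =>
    (hf x (Ioo_subset_Icc_self hx)).hasDerivAt (Icc_mem_nhds hx.1 hx.2)
  have hslope : ∀ x ∈ Ioo u v, m ≤ deriv f x := fun x hx => by
    rw [(hderiv x hx).deriv]
    exact hbound x (Ioo_subset_Ico_self hx) (hleft x (Ioo_subset_Icc_self hx))
  rw [← interior_Icc] at hderiv hslope
  have hgrowth : m * (t - u) ≤ f t - f u :=
    (convex_Icc u v).mul_sub_le_image_sub_of_le_deriv (HasDerivWithinAt.continuousOn hf)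
      (fun x hx => (hderiv x hx).differentiableAt.differentiableWithinAt)
      hslope u (left_mem_Icc.mpr (ht.1.trans ht.2)) t ht ht.1
  linarith

end DerivativeBounds

/-- `(a, b)` is an integral curve on `[0, T]` of the vector field
`sin (r / 2) cos (r' / 2) (∂_r - ∂_{r'})` in the coordinates `(r, r')` of the model leaf.
Derivatives are taken within `[0, T]`, hence one-sided at the endpoints. -/
structure IsModelLeafFlowLine (T : ℝ) (a b : ℝ → ℝ) : Prop where
  hasDerivWithinAt_fst : ∀ t ∈ Icc 0 T,
    HasDerivWithinAt a (Real.sin (a t / 2) * Real.cos (b t / 2)) (Icc 0 T) t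
  hasDerivWithinAt_snd : ∀ t ∈ Icc 0 T,
    HasDerivWithinAt b (-(Real.sin (a t / 2) * Real.cos (b t / 2))) (Icc 0 T) t

namespace IsModelLeafFlowLine

variable {T : ℝ} {a b : ℝ → ℝ}

theorem add_eq (h : IsModelLeafFlowLine T a b) : ∀ t ∈ Icc 0 T, a t + b t = a 0 + b 0 := by
  have hderiv : ∀ t ∈ Icc 0 T, HasDerivWithinAt (a + b) 0 (Icc 0 T) t := fun t ht => by
    simpa using (h.hasDerivWithinAt_fst t ht).add (h.hasDerivWithinAt_snd t ht)
  exact constant_of_derivWithin_zero (fun t ht => (hderiv t ht).differentiableWithinAt)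
    fun t ht => (hderiv t (Ico_subset_Icc_self ht)).derivWithin
      (uniqueDiffOn_Icc (ht.1.trans_lt ht.2) t (Ico_subset_Icc_self ht))

theorem add_sin_mul_le_fst (h : IsModelLeafFlowLine T a b) (hle : b 0 ≤ a 0)
    (hsin : 0 < Real.sin ((a 0 + b 0) / 2)) (hregion : ∀ t ∈ Icc 0 T, a t ≤ Real.pi ∧ 0 ≤ b t) :
    ∀ t ∈ Icc 0 T, a 0 + Real.sin ((a 0 + b 0) / 2) / 2 * t ≤ a t := by
  have hspeed : ∀ t ∈ Icc 0 T, a 0 ≤ a t →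
      Real.sin ((a 0 + b 0) / 2) / 2 ≤ Real.sin (a t / 2) * Real.cos (b t / 2) := by
    intro t ht hat
    have hsum := h.add_eq t ht
    obtain ⟨haπ, hb₀⟩ := hregion t ht
    have hsin_diff : 0 ≤ Real.sin ((a t - b t) / 2) :=
      Real.sin_nonneg_of_nonneg_of_le_pi (by linarith) (by linarith [Real.pi_pos])
    rw [sin_half_mul_cos_half, hsum]
    linarith
  simpa only [sub_zero] using
    add_mul_sub_le_of_le_deriv_of_left_le (half_pos hsin) h.hasDerivWithinAt_fst
      fun t ht => hspeed t (Ico_subset_Icc_self ht)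

end IsModelLeafFlowLine

theorem stmt_8_general {a b : ℝ → ℝ} (h : IsModelLeafFlowLine Real.pi a b) (hle : b 0 ≤ a 0) :
    ∃ t ∈ Icc 0 Real.pi, Real.pi ≤ a t ∨ b t ≤ 0 := by
  by_contra! hstay
  obtain ⟨ha₀, hb₀⟩ := hstay 0 (left_mem_Icc.mpr Real.pi_pos.le)
  have hπ : Real.pi ∈ Icc 0 Real.pi := right_mem_Icc.mpr Real.pi_pos.le
  obtain ⟨haπ, hbπ⟩ := hstay Real.pi hπ
  have hsum : a Real.pi + b Real.pi = a 0 + b 0 := h.add_eq Real.pi hπ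
  set s := (a 0 + b 0) / 2 with hs
  have hs₀ : 0 < s := by linarith
  have hsπ : s < Real.pi := by linarith
  have hgrowth : a 0 + Real.sin s / 2 * Real.pi ≤ a Real.pi :=
    h.add_sin_mul_le_fst hle (Real.sin_pos_of_pos_of_lt_pi hs₀ hsπ)
      (fun t ht => (hstay t ht).imp le_of_lt le_of_lt) Real.pi hπ
  have hjordan : min s (Real.pi - s) ≤ Real.sin s / 2 * Real.pi := by
    have := two_div_pi_mul_min_le_sin hs₀.le hsπ.le
    rw [div_mul_eq_mul_div, div_le_iff₀ Real.pi_pos] at this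
    linarith
  rcases min_le_iff.mp hjordan with hmin | hmin <;> linarith

/-- Uniform finite exit time for flow lines on the model leaf of the bicharacteristic
flowout at the front face: if `a, b` are C¹ on `[0, π]` with `a(0) = b(0) = r₀ ∈ (0, π)`,
`a′ = sin(a/2)cos(b/2)` and `b′ = −sin(a/2)cos(b/2)`, then at some time `t ∈ [0, π]`
either `a(t) ≥ π` or `b(t) ≤ 0`. -/
theorem stmt_8 (r₀ : ℝ) (hr₀ : r₀ ∈ Set.Ioo 0 Real.pi)
    (a b : ℝ → ℝ) (ha0 : a 0 = r₀) (hb0 : b 0 = r₀)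
    (ha : ∀ t ∈ Set.Icc (0 : ℝ) Real.pi,
        HasDerivWithinAt a (Real.sin (a t / 2) * Real.cos (b t / 2))
          (Set.Icc (0 : ℝ) Real.pi) t)
    (hb : ∀ t ∈ Set.Icc (0 : ℝ) Real.pi,
        HasDerivWithinAt b (-(Real.sin (a t / 2) * Real.cos (b t / 2)))
          (Set.Icc (0 : ℝ) Real.pi) t) :
    ∃ t ∈ Set.Icc (0 : ℝ) Real.pi, Real.pi ≤ a t ∨ b t ≤ 0 :=
  stmt_8_general ⟨ha, hb⟩ (hb0.trans ha0.symm).le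
end
end

section
/- Let n ≥ 1 be an integer, h > 0, and let g^{ij} : (0,∞) × ℝⁿ → ℝ (1 ≤ i, j ≤ n) be continuous functions. For u : (0,∞) × ℝⁿ → ℂ smooth (C²), define (P u)(x,y) = −h²(x∂ₓ)²u + n h² x ∂ₓu − h² x² Σ_{i,j} g^{ij}(x,y) ∂_{yᵢ}∂_{yⱼ}u − (h² n²/4 + 1) u. Then for every such u and every (x, y) with x > 0, writing x^{α} = exp(α log x) for complex α: x^{−n/2 − 1 + i/h} · P(x^{n/2 − i/h} u)(x,y) = 2ih ∂ₓu(x,y) − h² ∂ₓ(x ∂ₓu)(x,y) − h² x Σ_{i,j} g^{ij}(x,y) ∂_{yᵢ}∂_{yⱼ}u(x,y). In particular all negative powers of x and all zeroth-order terms cancel exactly. -/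
open Filter Topology Set Complex

noncomputable section

/-!
Write `θ = x∂ₓ` for the Euler operator. Completing the square, the part of `P` without
`y`-derivatives is `-h²(θ - n/2)² - 1`. Conjugation by `x ^ a` replaces `θ` by `θ + a`, so for
`a = n/2 - i/h` it becomes `-h²(θ - i/h)² - 1 = -h²θ² + 2ihθ`: the constants cancel, and dividing
by `x` leaves `-h²∂ₓ(x∂ₓ) + 2ih∂ₓ`. The `y`-derivatives commute with `x ^ a`.
-/

section EulerOperator

variable {a f' f'' w' w'' : ℂ} {f w df dw : ℝ → ℂ} {x : ℝ}

theorem hasDerivAt_ofReal_cpow_mul (hx : x ≠ 0) (hf : HasDerivAt f f' x) :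
    HasDerivAt (fun s : ℝ => (s : ℂ) ^ a * f s) ((x : ℂ) ^ a * (a * f x + x * f') / x) x := by
  have hxc : (x : ℂ) ≠ 0 := ofReal_ne_zero.mpr hx
  have hpow : HasDerivAt (fun s : ℝ => (s : ℂ) ^ a) (a * (x : ℂ) ^ (a - 1)) x := by
    rcases eq_or_ne a 0 with rfl | ha
    · simpa only [cpow_zero, zero_mul] using hasDerivAt_const x (1 : ℂ)
    · exact hasDerivAt_ofReal_cpow_const hx ha
  refine (hpow.mul hf).congr_deriv ?_
  rw [cpow_sub _ _ hxc, cpow_one]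
  field_simp

theorem mul_deriv_eq_cpow_mul (hx : x ≠ 0) (hwf : ∀ᶠ s : ℝ in 𝓝 x, w s = (s : ℂ) ^ a * f s)
    (hf : HasDerivAt f f' x) (hw : HasDerivAt w w' x) :
    x * w' = (x : ℂ) ^ a * (a * f x + x * f') := by
  rw [hw.unique ((hasDerivAt_ofReal_cpow_mul hx hf).congr_of_eventuallyEq hwf),
    mul_div_cancel₀ _ (ofReal_ne_zero.mpr hx)]

theorem hasDerivAt_ofReal_mul (hf : HasDerivAt f f' x) :
    HasDerivAt (fun s : ℝ => (s : ℂ) * f s) (f x + x * f') x := by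
  simpa only [id, ofReal_one, one_mul] using! (hasDerivAt_id x).ofReal_comp.mul hf

/-- `θ²(x ^ a f) = x ^ a (θ + a)²f`, with `θ²` expanded as `x(∂ₓ + x∂ₓ²)`. -/
theorem mul_deriv_mul_deriv_eq_cpow_mul (hx : x ≠ 0)
    (hwf : ∀ᶠ s : ℝ in 𝓝 x, w s = (s : ℂ) ^ a * f s)
    (hf : ∀ᶠ s in 𝓝 x, HasDerivAt f (df s) s) (hdf : HasDerivAt df f'' x)
    (hw : ∀ᶠ s in 𝓝 x, HasDerivAt w (dw s) s) (hdw : HasDerivAt dw w'' x) :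
    x * (dw x + x * w'') =
      (x : ℂ) ^ a * (a ^ 2 * f x + 2 * a * (x * df x) + x * (df x + x * f'')) := by
  have euler_w : ∀ᶠ s : ℝ in 𝓝 x, s * dw s = (s : ℂ) ^ a * (a * f s + s * df s) := by
    filter_upwards [eventually_ne_nhds hx, hwf.eventually_nhds, hf, hw] with s hs hwfs hfs hws
    exact mul_deriv_eq_cpow_mul hs hwfs hfs hws
  rw [mul_deriv_eq_cpow_mul hx euler_w
    ((hf.self_of_nhds.const_mul a).add (hasDerivAt_ofReal_mul hdf)) (hasDerivAt_ofReal_mul hdw)]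
  ring

end EulerOperator

theorem partialDeriv_eq_const_mul {𝕜 A ι : Type*} [NontriviallyNormedField 𝕜] [NormedRing A]
    [NormedAlgebra 𝕜 A] [DecidableEq ι] {c u' w' : A} {u w : (ι → 𝕜) → A} {y : ι → 𝕜} {i : ι}
    (hwu : ∀ z, w z = c * u z)
    (hu : HasDerivAt (fun t => u (Function.update y i t)) u' (y i))
    (hw : HasDerivAt (fun t => w (Function.update y i t)) w' (y i)) : w' = c * u' := by
  simp only [hwu] at hw
  exact hw.unique (hu.const_mul c)

theorem secondPartialDeriv_eq_const_mul {𝕜 A ι : Type*} [NontriviallyNormedField 𝕜]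
    [NormedRing A] [NormedAlgebra 𝕜 A] [DecidableEq ι] {c u'' w'' : A} {u w ui wi : (ι → 𝕜) → A}
    {y : ι → 𝕜} {i j : ι} (hwu : ∀ z, w z = c * u z)
    (hu : ∀ z, HasDerivAt (fun t => u (Function.update z i t)) (ui z) (z i))
    (hui : HasDerivAt (fun t => ui (Function.update y j t)) u'' (y j))
    (hw : ∀ z, HasDerivAt (fun t => w (Function.update z i t)) (wi z) (z i))
    (hwi : HasDerivAt (fun t => wi (Function.update y j t)) w'' (y j)) : w'' = c * u'' :=
  partialDeriv_eq_const_mul (fun z => partialDeriv_eq_const_mul hwu (hu z) (hw z)) hui hwi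

theorem cpow_neg_sub_one_mul_eq_iff {x : ℂ} (hx : x ≠ 0) {a p q : ℂ} :
    x ^ (-a - 1) * p = q ↔ p = x ^ a * (x * q) := by
  have hxa : x ^ a ≠ 0 := by simp [cpow_eq_zero_iff, hx]
  rw [cpow_sub _ _ hx, cpow_neg, cpow_one]
  field_simp

theorem conjugated_radial_symbol {h : ℂ} (hh : h ≠ 0) {ν a : ℂ} (ha : a = ν / 2 - I / h)
    (u θu θθu : ℂ) :
    -h ^ 2 * (a ^ 2 * u + 2 * a * θu + θθu) + ν * h ^ 2 * (a * u + θu)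
        - (h ^ 2 * ν ^ 2 / 4 + 1) * u =
      2 * I * h * θu - h ^ 2 * θθu := by
  have hha : h * (ν / 2 - a) = I := by
    rw [ha]
    field_simp
    ring
  have hI : (h * (ν / 2 - a)) ^ 2 = -1 := by rw [hha, I_sq]
  linear_combination (-u) * hI + 2 * h * θu * hha

theorem stmt_9_general {ι : Type*} [Fintype ι] [DecidableEq ι] {ν h : ℂ} (hh : h ≠ 0)
    (g : ℝ → (ι → ℝ) → ι → ι → ℂ)
    {u ux uxx : ℝ → (ι → ℝ) → ℂ} {uy : ℝ → (ι → ℝ) → ι → ℂ} {uyy : ℝ → (ι → ℝ) → ι → ι → ℂ}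
    (hux : ∀ x y, 0 < x → HasDerivAt (fun s => u s y) (ux x y) x)
    (huxx : ∀ x y, 0 < x → HasDerivAt (fun s => ux s y) (uxx x y) x)
    (huy : ∀ x y i, 0 < x →
      HasDerivAt (fun v => u x (Function.update y i v)) (uy x y i) (y i))
    (huyy : ∀ x y i j, 0 < x →
      HasDerivAt (fun v => uy x (Function.update y j v) i) (uyy x y i j) (y j))
    {w wx wxx : ℝ → (ι → ℝ) → ℂ} {wy : ℝ → (ι → ℝ) → ι → ℂ} {wyy : ℝ → (ι → ℝ) → ι → ι → ℂ}
    (hw : ∀ (x : ℝ) y, 0 < x → w x y = (x : ℂ) ^ (ν / 2 - I / h) * u x y)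
    (hwx : ∀ x y, 0 < x → HasDerivAt (fun s => w s y) (wx x y) x)
    (hwxx : ∀ x y, 0 < x → HasDerivAt (fun s => wx s y) (wxx x y) x)
    (hwy : ∀ x y i, 0 < x →
      HasDerivAt (fun v => w x (Function.update y i v)) (wy x y i) (y i))
    (hwyy : ∀ x y i j, 0 < x →
      HasDerivAt (fun v => wy x (Function.update y j v) i) (wyy x y i j) (y j))
    (x : ℝ) (y : ι → ℝ) (hx : 0 < x) :
    (x : ℂ) ^ (-ν / 2 - 1 + I / h) *
        (-h ^ 2 * (x * wx x y + x ^ 2 * wxx x y) + ν * h ^ 2 * (x * wx x y)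
          - h ^ 2 * x ^ 2 * ∑ i, ∑ j, g x y i j * wyy x y i j
          - (h ^ 2 * ν ^ 2 / 4 + 1) * w x y) =
      2 * I * h * ux x y - h ^ 2 * (ux x y + x * uxx x y)
        - h ^ 2 * x * ∑ i, ∑ j, g x y i j * uyy x y i j := by
  obtain ⟨a, ha⟩ : ∃ a, a = ν / 2 - I / h := ⟨_, rfl⟩
  rw [← ha] at hw
  have near : ∀ᶠ s in 𝓝 x, 0 < s := lt_mem_nhds hx
  have euler : x * wx x y = (x : ℂ) ^ a * (a * u x y + x * ux x y) :=
    mul_deriv_eq_cpow_mul hx.ne' (near.mono (hw · y)) (hux x y hx) (hwx x y hx)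
  have euler_sq : x * (wx x y + x * wxx x y) = (x : ℂ) ^ a *
      (a ^ 2 * u x y + 2 * a * (x * ux x y) + x * (ux x y + x * uxx x y)) :=
    mul_deriv_mul_deriv_eq_cpow_mul hx.ne' (near.mono (hw · y)) (near.mono (hux · y))
      (huxx x y hx) (near.mono (hwx · y)) (hwxx x y hx)
  have hess (i j : ι) : wyy x y i j = (x : ℂ) ^ a * uyy x y i j :=
    secondPartialDeriv_eq_const_mul (hw x · hx) (huy x · i hx) (huyy x y i j hx)
      (hwy x · i hx) (hwyy x y i j hx)
  have hess_sum : ∑ i, ∑ j, g x y i j * wyy x y i j =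
      (x : ℂ) ^ a * ∑ i, ∑ j, g x y i j * uyy x y i j := by
    simp only [hess, Finset.mul_sum, mul_left_comm]
  have exponent : -ν / 2 - 1 + I / h = -a - 1 := by rw [ha]; ring
  rw [exponent, cpow_neg_sub_one_mul_eq_iff (ofReal_ne_zero.mpr hx.ne'), hess_sum, hw x y hx]
  linear_combination (-h ^ 2) * euler_sq + ν * h ^ 2 * euler +
    (x : ℂ) ^ a * conjugated_radial_symbol hh ha (u x y) (x * ux x y) (x * (ux x y + x * uxx x y))

/-- The key cancellation identity for the model semiclassical operator
`P = −h²(x∂ₓ)² + nh²x∂ₓ − h²x²Σ gⁱʲ∂_{yᵢ}∂_{yⱼ} − (h²n²/4 + 1)` on an asymptotically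
hyperbolic space: conjugating by `x^{n/2 − i/h}` and rescaling by `x^{-1}`,
`x^{−n/2−1+i/h} · P(x^{n/2−i/h} u) = 2ih ∂ₓu − h²∂ₓ(x∂ₓu) − h²xΣ gⁱʲ∂_{yᵢ}∂_{yⱼ}u`;
all negative powers of `x` and all zeroth order terms cancel exactly.
Here `w = x^{n/2 − i/h} u` and `ux, uxx, uy, uyy, wx, wxx, wy, wyy` are the indicated
partial derivatives of `u` and of `w`. -/
theorem stmt_9 (n : ℕ) (hn : 1 ≤ n) (h : ℝ) (hh : 0 < h)
    (g : ℝ → (Fin n → ℝ) → Fin n → Fin n → ℝ)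
    (hg : ∀ i j, ContinuousOn (fun p : ℝ × (Fin n → ℝ) => g p.1 p.2 i j)
        {p : ℝ × (Fin n → ℝ) | 0 < p.1})
    (u ux uxx : ℝ → (Fin n → ℝ) → ℂ)
    (uy : ℝ → (Fin n → ℝ) → Fin n → ℂ)
    (uyy : ℝ → (Fin n → ℝ) → Fin n → Fin n → ℂ)
    (hux : ∀ (x : ℝ) (y : Fin n → ℝ), 0 < x → HasDerivAt (fun s => u s y) (ux x y) x)
    (huxx : ∀ (x : ℝ) (y : Fin n → ℝ), 0 < x → HasDerivAt (fun s => ux s y) (uxx x y) x)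
    (huy : ∀ (x : ℝ) (y : Fin n → ℝ) (i : Fin n), 0 < x →
        HasDerivAt (fun v => u x (Function.update y i v)) (uy x y i) (y i))
    (huyy : ∀ (x : ℝ) (y : Fin n → ℝ) (i j : Fin n), 0 < x →
        HasDerivAt (fun v => uy x (Function.update y j v) i) (uyy x y i j) (y j))
    (w wx wxx : ℝ → (Fin n → ℝ) → ℂ)
    (wy : ℝ → (Fin n → ℝ) → Fin n → ℂ)
    (wyy : ℝ → (Fin n → ℝ) → Fin n → Fin n → ℂ)
    (hw : ∀ (x : ℝ) (y : Fin n → ℝ), 0 < x →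
        w x y = (x : ℂ) ^ ((n : ℂ) / 2 - Complex.I / (h : ℂ)) * u x y)
    (hwx : ∀ (x : ℝ) (y : Fin n → ℝ), 0 < x → HasDerivAt (fun s => w s y) (wx x y) x)
    (hwxx : ∀ (x : ℝ) (y : Fin n → ℝ), 0 < x → HasDerivAt (fun s => wx s y) (wxx x y) x)
    (hwy : ∀ (x : ℝ) (y : Fin n → ℝ) (i : Fin n), 0 < x →
        HasDerivAt (fun v => w x (Function.update y i v)) (wy x y i) (y i))
    (hwyy : ∀ (x : ℝ) (y : Fin n → ℝ) (i j : Fin n), 0 < x →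
        HasDerivAt (fun v => wy x (Function.update y j v) i) (wyy x y i j) (y j)) :
    ∀ (x : ℝ) (y : Fin n → ℝ), 0 < x →
      (x : ℂ) ^ (-(n : ℂ) / 2 - 1 + Complex.I / (h : ℂ)) *
        (-(h : ℂ) ^ 2 * ((x : ℂ) * wx x y + (x : ℂ) ^ 2 * wxx x y)
          + (n : ℂ) * (h : ℂ) ^ 2 * ((x : ℂ) * wx x y)
          - (h : ℂ) ^ 2 * (x : ℂ) ^ 2 * ∑ i, ∑ j, (g x y i j : ℂ) * wyy x y i j
          - ((h : ℂ) ^ 2 * (n : ℂ) ^ 2 / 4 + 1) * w x y)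
      = 2 * Complex.I * (h : ℂ) * ux x y
          - (h : ℂ) ^ 2 * (ux x y + (x : ℂ) * uxx x y)
          - (h : ℂ) ^ 2 * (x : ℂ) * ∑ i, ∑ j, (g x y i j : ℂ) * uyy x y i j := by
  exact stmt_9_general (ofReal_ne_zero.mpr hh.ne') (fun x y i j => (g x y i j : ℂ))
    hux huxx huy huyy hw hwx hwxx hwy hwyy
end
end

section
/- For every integer n ≥ 1 there exists a constant C > 0 such that for all r ∈ (0, 1], the integral ∫_{cosh r}^{∞} (cosh r)^{n/2} · (s + 1)^{−n/2} · (s − 1)^{−n/2} · (s − cosh r)^{−1/2} ds is finite and is at most C · r^{−n}. -/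
open MeasureTheory

noncomputable section

/-!
Write `c = cosh r > 1`. For `s > c` we have `s + 1 ≥ s` and, since `1 / s ≤ 1 / c`, also
`s - 1 ≥ s * (c - 1) / c`. The integrand without its constant factor is therefore at most
`((c - 1) / c) ^ (-n / 2) * s ^ (-n) * (s - c) ^ (-1 / 2)`, which is homogeneous in `(s, c)` up to
the first factor: the dilation `s = c * t` turns its integral into a power of `c` times a convergent
beta integral over `(1, ∞)`. In total this gives the bound `B * c ^ (1 / 2) * (c - 1) ^ (-n / 2)`,
and `c - 1 ≥ r ^ 2 / 2`.
-/

section BetaTail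

variable {p q : ℝ}

/-- The Euler beta value `B(q + 1, -p - q - 1)` in its form over `(1, ∞)`; it is the constant in the
scaling law `setIntegral_rpow_mul_sub_rpow`. The integral converges for `-1 < q` and `p + q < -1`,
and is the junk value `0` otherwise. -/
def betaTail (p q : ℝ) : ℝ := ∫ t in Set.Ioi 1, t ^ p * (t - 1) ^ q

lemma integrableOn_rpow_mul_one_add_rpow (hq : -1 < q) (hpq : p + q < -1) :
    IntegrableOn (fun u : ℝ => u ^ q * (1 + u) ^ p) (Set.Ioi 0) := by
  have hp : p ≤ 0 := by linarith
  have norm_le {u v : ℝ} (hu : 0 < u) (hv : 0 < v) (huv : v ≤ 1 + u) :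
      ‖(1 + u) ^ p‖ ≤ ‖v ^ p‖ := by
    rw [Real.norm_of_nonneg (by positivity), Real.norm_of_nonneg (by positivity)]
    exact Real.rpow_le_rpow_of_nonpos hv huv hp
  have continuousOn : ContinuousOn (fun u : ℝ => (1 + u) ^ p) (Set.Ioi 0) :=
    (by fun_prop : ContinuousOn (fun u : ℝ => 1 + u) _).rpow_const
      fun u (hu : 0 < u) => Or.inl (by positivity)
  have bigO_top : (fun u : ℝ => (1 + u) ^ p) =O[Filter.atTop] (· ^ (-(-p))) := by
    refine .of_bound' ?_
    filter_upwards [Filter.eventually_gt_atTop 0] with u hu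
    simpa only [neg_neg] using norm_le hu hu (by linarith)
  have bigO_zero : (fun u : ℝ => (1 + u) ^ p) =O[nhdsWithin 0 (Set.Ioi 0)] (· ^ (-(0 : ℝ))) := by
    refine .of_bound' ?_
    filter_upwards [self_mem_nhdsWithin] with u (hu : 0 < u)
    simpa using norm_le hu one_pos (by linarith)
  simpa only [add_sub_cancel_right] using
    mellin_convergent_of_isBigO_scalar (s := q + 1)
      (continuousOn.locallyIntegrableOn measurableSet_Ioi)
      bigO_top (by linarith) bigO_zero (by linarith)

lemma integrableOn_rpow_mul_sub_one_rpow (hq : -1 < q) (hpq : p + q < -1) :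
    IntegrableOn (fun t : ℝ => t ^ p * (t - 1) ^ q) (Set.Ioi 1) := by
  have h := ((measurePreserving_sub_right volume (1 : ℝ)).integrableOn_comp_preimage
    (MeasurableEquiv.subRight (1 : ℝ)).measurableEmbedding).2
      (integrableOn_rpow_mul_one_add_rpow hq hpq)
  simpa [Function.comp_def, mul_comm] using h

lemma betaTail_pos (hq : -1 < q) (hpq : p + q < -1) : 0 < betaTail p q := by
  have integrand_pos : ∀ t ∈ Set.Ioi (1 : ℝ), 0 < t ^ p * (t - 1) ^ q := fun t (ht : 1 < t) =>
    mul_pos (Real.rpow_pos_of_pos (by linarith) p) (Real.rpow_pos_of_pos (by linarith) q)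
  have subset_support : Set.Ioi 1 ⊆ Function.support fun t : ℝ => t ^ p * (t - 1) ^ q :=
    fun t ht => (integrand_pos t ht).ne'
  rw [betaTail, setIntegral_pos_iff_support_of_nonneg_ae
    ((ae_restrict_mem measurableSet_Ioi).mono fun t ht => (integrand_pos t ht).le)
    (integrableOn_rpow_mul_sub_one_rpow hq hpq),
    Set.inter_eq_right.2 subset_support]
  exact Measure.measure_Ioi_pos volume 1

variable {c : ℝ}

lemma mul_rpow_mul_mul_sub_rpow (p q : ℝ) (hc : 0 < c) {t : ℝ} (ht : 1 < t) :
    (c * t) ^ p * (c * t - c) ^ q = c ^ (p + q) * (t ^ p * (t - 1) ^ q) := by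
  rw [show c * t - c = c * (t - 1) by ring, Real.mul_rpow hc.le (by linarith),
    Real.mul_rpow hc.le (by linarith), Real.rpow_add hc]
  ring

lemma integrableOn_rpow_mul_sub_rpow (hq : -1 < q) (hpq : p + q < -1) (hc : 0 < c) :
    IntegrableOn (fun s : ℝ => s ^ p * (s - c) ^ q) (Set.Ioi c) := by
  rw [← mul_one c, ← integrableOn_Ioi_comp_mul_left_iff _ _ hc, mul_one]
  exact IntegrableOn.congr_fun ((integrableOn_rpow_mul_sub_one_rpow hq hpq).const_mul _)
    (fun t ht => (mul_rpow_mul_mul_sub_rpow p q hc ht).symm) measurableSet_Ioi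

lemma setIntegral_rpow_mul_sub_rpow (p q : ℝ) (hc : 0 < c) :
    ∫ s in Set.Ioi c, s ^ p * (s - c) ^ q = c ^ (p + q + 1) * betaTail p q := by
  have dilation := integral_comp_mul_left_Ioi (fun s : ℝ => s ^ p * (s - c) ^ q) 1 hc
  rw [setIntegral_congr_fun measurableSet_Ioi fun t ht => mul_rpow_mul_mul_sub_rpow p q hc ht,
    integral_const_mul, mul_one, smul_eq_mul, eq_inv_mul_iff_mul_eq₀ hc.ne'] at dilation
  rw [← dilation, Real.rpow_add_one hc.ne', betaTail]
  ring

end BetaTail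

section NearDiagonal

variable {a q c : ℝ}

lemma add_one_rpow_mul_sub_one_rpow_le (ha : a ≤ 0) (hc : 1 < c) {s : ℝ} (hs : c ≤ s) :
    (s + 1) ^ a * (s - 1) ^ a ≤ ((c - 1) / c) ^ a * s ^ (2 * a) := by
  have hc0 : 0 < c := by linarith
  have hs0 : 0 < s := by linarith
  have ratio_pos : 0 < (c - 1) / c := div_pos (by linarith) hc0
  have ratio_mul_le : (c - 1) / c * s ≤ s - 1 := by
    rw [div_mul_eq_mul_div, div_le_iff₀ hc0]
    linarith
  calc (s + 1) ^ a * (s - 1) ^ a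
      ≤ s ^ a * ((c - 1) / c * s) ^ a := by
        have := Real.rpow_nonneg (show 0 ≤ s - 1 by linarith) a
        gcongr ?_ * ?_
        · exact Real.rpow_le_rpow_of_nonpos hs0 (by linarith) ha
        · exact Real.rpow_le_rpow_of_nonpos (by positivity) ratio_mul_le ha
    _ = ((c - 1) / c) ^ a * s ^ (2 * a) := by
        rw [Real.mul_rpow ratio_pos.le hs0.le, two_mul, Real.rpow_add hs0]
        ring

lemma add_one_rpow_mul_sub_one_rpow_mul_sub_rpow_le (ha : a ≤ 0) (q : ℝ) (hc : 1 < c) {s : ℝ}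
    (hs : c ≤ s) :
    (s + 1) ^ a * (s - 1) ^ a * (s - c) ^ q ≤
      ((c - 1) / c) ^ a * (s ^ (2 * a) * (s - c) ^ q) := by
  rw [← mul_assoc]
  exact mul_le_mul_of_nonneg_right (add_one_rpow_mul_sub_one_rpow_le ha hc hs)
    (Real.rpow_nonneg (sub_nonneg.2 hs) q)

lemma integrableOn_add_one_rpow_mul_sub_one_rpow_mul_sub_rpow (hq : -1 < q)
    (haq : 2 * a + q < -1) (hc : 1 < c) :
    IntegrableOn (fun s : ℝ => (s + 1) ^ a * (s - 1) ^ a * (s - c) ^ q) (Set.Ioi c) := by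
  refine ((integrableOn_rpow_mul_sub_rpow hq haq (by linarith)).const_mul
    (((c - 1) / c) ^ a)).mono' (by fun_prop) ?_
  filter_upwards [ae_restrict_mem measurableSet_Ioi] with s (hs : c < s)
  have h_add : 0 < s + 1 := by linarith
  have h_sub : 0 < s - 1 := by linarith
  have := sub_pos.2 hs
  rw [Real.norm_of_nonneg (by positivity)]
  exact add_one_rpow_mul_sub_one_rpow_mul_sub_rpow_le (by linarith) q hc hs.le

lemma setIntegral_add_one_rpow_mul_sub_one_rpow_mul_sub_rpow_le (hq : -1 < q)
    (haq : 2 * a + q < -1) (hc : 1 < c) :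
    ∫ s in Set.Ioi c, (s + 1) ^ a * (s - 1) ^ a * (s - c) ^ q ≤
      c ^ (a + q + 1) * (c - 1) ^ a * betaTail (2 * a) q := by
  have hc0 : 0 < c := by linarith
  calc ∫ s in Set.Ioi c, (s + 1) ^ a * (s - 1) ^ a * (s - c) ^ q
      ≤ ∫ s in Set.Ioi c, ((c - 1) / c) ^ a * (s ^ (2 * a) * (s - c) ^ q) :=
        setIntegral_mono_on (integrableOn_add_one_rpow_mul_sub_one_rpow_mul_sub_rpow hq haq hc)
          ((integrableOn_rpow_mul_sub_rpow hq haq hc0).const_mul _) measurableSet_Ioi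
          fun s (hs : c < s) =>
            add_one_rpow_mul_sub_one_rpow_mul_sub_rpow_le (by linarith) q hc hs.le
    _ = ((c - 1) / c) ^ a * (c ^ (2 * a + q + 1) * betaTail (2 * a) q) := by
        rw [integral_const_mul, setIntegral_rpow_mul_sub_rpow _ _ hc0]
    _ = c ^ (a + q + 1) * (c - 1) ^ a * betaTail (2 * a) q := by
        rw [Real.div_rpow (by linarith) hc0.le,
          show 2 * a + q + 1 = a + (a + q + 1) by ring, Real.rpow_add hc0 a]
        field_simp

end NearDiagonal

section Cosh

lemma sq_div_two_le_cosh_sub_one (r : ℝ) : r ^ 2 / 2 ≤ Real.cosh r - 1 := by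
  have half_sq_le : (r / 2) ^ 2 ≤ Real.sinh (r / 2) ^ 2 := by
    rw [sq_le_sq, Real.abs_sinh]
    exact Real.self_le_sinh_iff.2 (abs_nonneg _)
  have cosh_eq : Real.cosh r = 2 * Real.sinh (r / 2) ^ 2 + 1 := by
    rw [← mul_div_cancel₀ r two_ne_zero, mul_div_assoc, Real.cosh_two_mul, Real.cosh_sq]
    ring_nf
  linarith

lemma cosh_sub_one_rpow_le {ν r : ℝ} (hν : 0 ≤ ν) (hr : 0 < r) :
    (Real.cosh r - 1) ^ (-ν / 2) ≤ 2 ^ (ν / 2) * r ^ (-ν) := by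
  calc (Real.cosh r - 1) ^ (-ν / 2)
      ≤ (r ^ 2 / 2) ^ (-ν / 2) :=
        Real.rpow_le_rpow_of_nonpos (by positivity) (sq_div_two_le_cosh_sub_one r) (by linarith)
    _ = 2 ^ (ν / 2) * r ^ (-ν) := by
        rw [Real.div_rpow (by positivity) zero_le_two, ← Real.rpow_natCast_mul hr.le,
          neg_div, Real.rpow_neg zero_le_two, div_inv_eq_mul, mul_comm]
        congr 2
        push_cast
        ring

end Cosh

theorem stmt_12_general {ν q : ℝ} (hq : -1 < q) (hν : q + 1 < ν) (R : ℝ) :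
    ∃ C : ℝ, 0 < C ∧ ∀ r : ℝ, 0 < r → r ≤ R →
      IntegrableOn (fun s : ℝ =>
          Real.cosh r ^ (ν / 2) * (s + 1) ^ (-ν / 2) * (s - 1) ^ (-ν / 2) *
            (s - Real.cosh r) ^ q)
        (Set.Ioi (Real.cosh r)) ∧
      (∫ s in Set.Ioi (Real.cosh r),
          Real.cosh r ^ (ν / 2) * (s + 1) ^ (-ν / 2) * (s - 1) ^ (-ν / 2) *
            (s - Real.cosh r) ^ q)
        ≤ C * r ^ (-ν) := by
  have exponent_lt : 2 * (-ν / 2) + q < -1 := by linarith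
  set B := betaTail (2 * (-ν / 2)) q
  have hB : 0 < B := betaTail_pos hq exponent_lt
  refine ⟨Real.cosh R ^ (q + 1) * 2 ^ (ν / 2) * B, by positivity, fun r hr hrR => ?_⟩
  have cosh_pos := Real.cosh_pos r
  have one_lt_cosh : 1 < Real.cosh r := Real.one_lt_cosh.2 hr.ne'
  have cosh_le : Real.cosh r ≤ Real.cosh R := Real.cosh_le_cosh.2 (abs_le_abs_of_nonneg hr.le hrR)
  simp only [mul_assoc (Real.cosh r ^ (ν / 2))]
  refine ⟨(integrableOn_add_one_rpow_mul_sub_one_rpow_mul_sub_rpow hq exponent_lt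
    one_lt_cosh).const_mul _, ?_⟩
  rw [integral_const_mul]
  calc Real.cosh r ^ (ν / 2) * ∫ s in Set.Ioi (Real.cosh r),
          (s + 1) ^ (-ν / 2) * (s - 1) ^ (-ν / 2) * (s - Real.cosh r) ^ q
      ≤ Real.cosh r ^ (ν / 2) *
          (Real.cosh r ^ (-ν / 2 + q + 1) * (Real.cosh r - 1) ^ (-ν / 2) * B) := by
        gcongr
        exact setIntegral_add_one_rpow_mul_sub_one_rpow_mul_sub_rpow_le hq exponent_lt one_lt_cosh
    _ = Real.cosh r ^ (q + 1) * (Real.cosh r - 1) ^ (-ν / 2) * B := by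
        rw [← mul_assoc, ← mul_assoc, ← Real.rpow_add cosh_pos]
        ring_nf
    _ ≤ Real.cosh R ^ (q + 1) * (2 ^ (ν / 2) * r ^ (-ν)) * B := by
        have exponent_nonneg : 0 ≤ q + 1 := by linarith
        gcongr
        exact cosh_sub_one_rpow_le (by linarith) hr
    _ = Real.cosh R ^ (q + 1) * 2 ^ (ν / 2) * B * r ^ (-ν) := by ring

/-- Near-diagonal integral bound for the high-energy Green function on odd-dimensional
hyperbolic space: for every `n ≥ 1` there is `C > 0` such that for all `r ∈ (0, 1]` the
integral `∫_{cosh r}^∞ (cosh r)^{n/2}(s+1)^{−n/2}(s−1)^{−n/2}(s−cosh r)^{−1/2} ds` is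
finite and bounded by `C r^{−n}`. -/
theorem stmt_12 (n : ℕ) (hn : 1 ≤ n) :
    ∃ C : ℝ, 0 < C ∧ ∀ r : ℝ, 0 < r → r ≤ 1 →
      IntegrableOn (fun s : ℝ =>
          Real.cosh r ^ ((n : ℝ) / 2) * (s + 1) ^ (-(n : ℝ) / 2) *
            (s - 1) ^ (-(n : ℝ) / 2) * (s - Real.cosh r) ^ (-(1 : ℝ) / 2))
        (Set.Ioi (Real.cosh r)) ∧
      (∫ s in Set.Ioi (Real.cosh r),
          Real.cosh r ^ ((n : ℝ) / 2) * (s + 1) ^ (-(n : ℝ) / 2) *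
            (s - 1) ^ (-(n : ℝ) / 2) * (s - Real.cosh r) ^ (-(1 : ℝ) / 2))
        ≤ C * r ^ (-(n : ℝ)) := by
  have one_le : (1 : ℝ) ≤ n := by exact_mod_cast hn
  exact stmt_12_general (by norm_num) (by linarith) 1
end
end

section
/- Let d, N ≥ 1, U ⊆ ℝᵈ × ℝᴺ open, φ : U → ℝ a C² function and λ : U → ℝᵈ a C¹ map. Let x : Ṽ → ℝᵈ (Ṽ ⊆ ℝᵈ open) and θ : W̃ → ℝᴺ (W̃ ⊆ ℝᵈ × ℝᴺ open) be C¹ maps such that T(x̃, θ̃) := (x(x̃), θ(x̃, θ̃)) lies in U, and set φ̃ = φ ∘ T and λ̃ = λ ∘ T. Then at every point (x̃, θ̃) at which ∇_θ φ(T(x̃, θ̃)) = 0, the Jacobian determinants satisfy det D_{(x̃,θ̃)}(λ̃, ∇_{θ̃}φ̃)(x̃,θ̃) = (det ∂θ/∂θ̃(x̃,θ̃))² · det ∂x/∂x̃(x̃) · det D_{(x,θ)}(λ, ∇_θφ)(T(x̃,θ̃)), where D_{(x̃,θ̃)}(F) denotes the (d+N)×(d+N) Jacobian matrix of the ℝ^{d+N}-valued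 map F. -/
open Set

noncomputable section

/-- The standard basis vectors of `ℝᵈ × ℝᴺ`, indexed by `Fin d ⊕ Fin N`. -/
def pbasis (d N : ℕ) : Fin d ⊕ Fin N → (Fin d → ℝ) × (Fin N → ℝ)
  | Sum.inl i => (Pi.single i 1, 0)
  | Sum.inr j => (0, Pi.single j 1)

/-- The components of a vector of `ℝᵈ × ℝᴺ`, indexed by `Fin d ⊕ Fin N`. -/
def pcomp {d N : ℕ} (v : (Fin d → ℝ) × (Fin N → ℝ)) : Fin d ⊕ Fin N → ℝ
  | Sum.inl i => v.1 i
  | Sum.inr j => v.2 j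

/-- The Jacobian matrix of a self-map of `ℝᵈ × ℝᴺ` at a point (rows indexed by output
components, columns by input directions). -/
def jmat {d N : ℕ} (H : (Fin d → ℝ) × (Fin N → ℝ) → (Fin d → ℝ) × (Fin N → ℝ))
    (q : (Fin d → ℝ) × (Fin N → ℝ)) : Matrix (Fin d ⊕ Fin N) (Fin d ⊕ Fin N) ℝ :=
  Matrix.of fun a b => pcomp (fderiv ℝ H q (pbasis d N b)) a

/-!
By the chain rule, `∇_θ̃ φ̃ = (∂θ/∂θ̃)ᵀ (∇_θ φ ∘ T)`. Although `∂θ/∂θ̃` is merely continuous, this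
product is differentiable wherever `∇_θ φ ∘ T` vanishes, and only its second factor contributes to
the derivative. There `D(λ̃, ∇_θ̃ φ̃)` therefore factors as
`diag(1, (∂θ/∂θ̃)ᵀ) · (D(λ, ∇_θ φ) ∘ T) · DT`. Since `DT` is block triangular with diagonal blocks
`∂x/∂x̃` and `∂θ/∂θ̃`, its determinant contributes the second factor `det ∂θ/∂θ̃`.
-/

open ContinuousLinearMap Filter Matrix Topology

theorem det_comp_fst_prod {R M M' : Type*} [CommRing R] [AddCommGroup M] [Module R M]
    [Module.Free R M] [Module.Finite R M] [AddCommGroup M'] [Module R M'] [Module.Free R M']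
    [Module.Finite R M'] (f : M →ₗ[R] M) (g : M × M' →ₗ[R] M') :
    ((f ∘ₗ LinearMap.fst R M M').prod g).det = f.det * (g ∘ₗ LinearMap.inr R M M').det := by
  let b := Module.Free.chooseBasis R M
  let b' := Module.Free.chooseBasis R M'
  have toMatrix_eq : LinearMap.toMatrix (b.prod b') (b.prod b')
      ((f ∘ₗ LinearMap.fst R M M').prod g) =
      fromBlocks (LinearMap.toMatrix b b f) 0 (LinearMap.toMatrix b b' (g ∘ₗ LinearMap.inl R M M'))
        (LinearMap.toMatrix b' b' (g ∘ₗ LinearMap.inr R M M')) := by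
    ext (i | i) (j | j) <;> simp [LinearMap.toMatrix_apply]
  rw [← LinearMap.det_toMatrix (b.prod b'), toMatrix_eq, det_fromBlocks_zero₁₂,
    LinearMap.det_toMatrix, LinearMap.det_toMatrix]

section ProductRule

variable {𝕜 X F : Type*} [NontriviallyNormedField 𝕜] [NormedAddCommGroup X] [NormedSpace 𝕜 X]
  [NormedAddCommGroup F] [NormedSpace 𝕜 F]

theorem hasFDerivAt_smul_of_eq_zero {c : X → 𝕜} {f : X → F} {f' : X →L[𝕜] F} {w : X}
    (hc : ContinuousAt c w) (hf : HasFDerivAt f f' w) (hf0 : f w = 0) :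
    HasFDerivAt (fun q => c q • f q) (c w • f') w := by
  have remainder : HasFDerivAt (fun q => (c q - c w) • f q) (0 : X →L[𝕜] F) w := by
    have hc_sub : (fun q => c q - c w) =o[𝓝 w] fun _ => (1 : ℝ) :=
      (Asymptotics.isLittleO_one_iff ℝ).2 (tendsto_sub_nhds_zero_iff.2 hc)
    have hf_bigO : f =O[𝓝 w] fun q => ‖q - w‖ := by
      simpa [hf0] using hf.isBigO_sub.norm_right
    rw [hasFDerivAt_iff_isLittleO]
    simpa [hf0] using hc_sub.smul_isBigO hf_bigO
  have hsum := (hf.const_smul (c w)).add remainder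
  rw [add_zero] at hsum
  exact hsum.congr_of_eventuallyEq (.of_forall fun q => by simp [← add_smul])

theorem hasFDerivAt_mulVec_of_eq_zero [CompleteSpace 𝕜] {m n : Type*} [Finite m] [Fintype n]
    {C : X → Matrix m n 𝕜} {g : X → n → 𝕜} {g' : X →L[𝕜] n → 𝕜} {w : X}
    (hC : ContinuousAt C w) (hg : HasFDerivAt g g' w) (hg0 : g w = 0) :
    HasFDerivAt (fun q => C q *ᵥ g q) ((C w).mulVecLin.toContinuousLinearMap ∘L g') w := by
  have := Fintype.ofFinite m
  rw [hasFDerivAt_pi'] at hg ⊢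
  intro i
  have hCi (j : n) : ContinuousAt (fun q => C q i j) w :=
    continuousAt_pi.1 (continuousAt_pi.1 hC i) j
  refine (HasFDerivAt.fun_sum (u := Finset.univ) fun j _ =>
    hasFDerivAt_smul_of_eq_zero (hCi j) (hg j) (congrFun hg0 j)).congr_fderiv ?_
  ext v
  simp [mulVec, dotProduct]

end ProductRule

theorem det_fderiv_comp {𝕜 E : Type*} [NontriviallyNormedField 𝕜] [NormedAddCommGroup E]
    [NormedSpace 𝕜 E] {f g : E → E} {w : E} (hf : DifferentiableAt 𝕜 f (g w))
    (hg : DifferentiableAt 𝕜 g w) :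
    (fderiv 𝕜 (f ∘ g) w).det = (fderiv 𝕜 f (g w)).det * (fderiv 𝕜 g w).det := by
  rw [fderiv_comp w hf hg]
  exact LinearMap.det_comp _ _

section Fibred

variable {𝕜 E E' F F' : Type*} [NontriviallyNormedField 𝕜]
  [NormedAddCommGroup E] [NormedSpace 𝕜 E] [NormedAddCommGroup E'] [NormedSpace 𝕜 E']
  [NormedAddCommGroup F] [NormedSpace 𝕜 F] [NormedAddCommGroup F'] [NormedSpace 𝕜 F']
  {ι κ : Type*} [DecidableEq ι]

/-- The fibre-preserving map `T(x̃, θ̃) = (x(x̃), θ(x̃, θ̃))` by which the phase variables are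
changed. -/
def fibredMap {A A' B B' : Type*} (x : A → A') (θ : A × B → B') (q : A × B) : A' × B' :=
  (x q.1, θ q)

variable (𝕜) in
/-- The gradient `∇_θ φ` in the fibre variables, as the vector of partial derivatives. -/
def fibreGrad (φ : E × (ι → 𝕜) → 𝕜) (q : E × (ι → 𝕜)) : ι → 𝕜 :=
  fun i => fderiv 𝕜 φ q (0, Pi.single i 1)

variable (𝕜) in
/-- The Jacobian matrix `∂θ/∂θ̃` in the fibre variables, with rows indexed by the components of
`θ`. -/
def fibreJacobian (θ : E × (ι → 𝕜) → κ → 𝕜) (q : E × (ι → 𝕜)) : Matrix κ ι 𝕜 :=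
  Matrix.of fun k i => fderiv 𝕜 θ q (0, Pi.single i 1) k

theorem hasFDerivAt_fibredMap {x : E → E'} {θ : E × F → F'} {q : E × F}
    (hx : DifferentiableAt 𝕜 x q.1) (hθ : DifferentiableAt 𝕜 θ q) :
    HasFDerivAt (fibredMap x θ)
      ((fderiv 𝕜 x q.1 ∘L ContinuousLinearMap.fst 𝕜 E F).prod (fderiv 𝕜 θ q)) q :=
  (hx.hasFDerivAt.comp q hasFDerivAt_fst).prodMk hθ.hasFDerivAt

theorem det_fderiv_fibredMap [Fintype ι] [FiniteDimensional 𝕜 E] {x : E → E}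
    {θ : E × (ι → 𝕜) → ι → 𝕜} {q : E × (ι → 𝕜)}
    (hx : DifferentiableAt 𝕜 x q.1) (hθ : DifferentiableAt 𝕜 θ q) :
    (fderiv 𝕜 (fibredMap x θ) q).det = (fderiv 𝕜 x q.1).det * (fibreJacobian 𝕜 θ q).det := by
  have toMatrix'_eq : LinearMap.toMatrix' (fderiv 𝕜 θ q ∘ₗ LinearMap.inr 𝕜 E (ι → 𝕜)) =
      fibreJacobian 𝕜 θ q := by
    ext i j
    simp [fibreJacobian, LinearMap.toMatrix'_apply]
  rw [(hasFDerivAt_fibredMap hx hθ).fderiv, ← toMatrix'_eq, LinearMap.det_toMatrix']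
  exact det_comp_fst_prod _ _

theorem differentiableAt_fibreGrad [Finite ι] {φ : E × (ι → 𝕜) → 𝕜} {q : E × (ι → 𝕜)}
    (hφ : DifferentiableAt 𝕜 (fderiv 𝕜 φ) q) : DifferentiableAt 𝕜 (fibreGrad 𝕜 φ) q := by
  have := Fintype.ofFinite ι
  exact differentiableAt_pi.2 fun i => hφ.clm_apply (differentiableAt_const (0, Pi.single i 1))

theorem continuousAt_fibreJacobian [Finite ι] [Finite κ] {θ : E × (ι → 𝕜) → κ → 𝕜} {q : E × (ι → 𝕜)}
    (hθ : ContinuousAt (fderiv 𝕜 θ) q) : ContinuousAt (fibreJacobian 𝕜 θ) q := by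
  have := Fintype.ofFinite ι
  have := Fintype.ofFinite κ
  refine continuousAt_pi.2 fun k => continuousAt_pi.2 fun i => ?_
  have hcol : ContinuousAt (fun p => fderiv 𝕜 θ p (0, Pi.single i 1)) q :=
    hθ.clm_apply continuousAt_const
  exact continuousAt_pi.1 hcol k

theorem fderiv_apply_zero_left_eq_dotProduct_fibreGrad [Fintype ι] (φ : E × (ι → 𝕜) → 𝕜)
    (q : E × (ι → 𝕜)) (v : ι → 𝕜) : fderiv 𝕜 φ q (0, v) = v ⬝ᵥ fibreGrad 𝕜 φ q := by
  have hv : ((0 : E), v) = ∑ i, v i • (0, Pi.single i 1) := by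
    ext i <;> simp [Prod.fst_sum, Prod.snd_sum, Pi.single_apply]
  rw [hv, map_sum]
  simp only [map_smul, smul_eq_mul, dotProduct, fibreGrad]

theorem fibreGrad_comp_fibredMap [Finite ι] [Fintype κ] [DecidableEq κ]
    {φ : E' × (κ → 𝕜) → 𝕜} {x : E → E'} {θ : E × (ι → 𝕜) → κ → 𝕜} {q : E × (ι → 𝕜)}
    (hφ : DifferentiableAt 𝕜 φ (fibredMap x θ q)) (hx : DifferentiableAt 𝕜 x q.1)
    (hθ : DifferentiableAt 𝕜 θ q) :
    fibreGrad 𝕜 (φ ∘ fibredMap x θ) q =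
      (fibreJacobian 𝕜 θ q)ᵀ *ᵥ fibreGrad 𝕜 φ (fibredMap x θ q) := by
  have := Fintype.ofFinite ι
  ext i
  have chain_rule := (hφ.hasFDerivAt.comp q (hasFDerivAt_fibredMap hx hθ)).fderiv
  calc
    fibreGrad 𝕜 (φ ∘ fibredMap x θ) q i
        = fderiv 𝕜 φ (fibredMap x θ q) (0, fderiv 𝕜 θ q (0, Pi.single i 1)) := by
      simp [fibreGrad, chain_rule]
    _ = ((fibreJacobian 𝕜 θ q)ᵀ *ᵥ fibreGrad 𝕜 φ (fibredMap x θ q)) i :=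
      fderiv_apply_zero_left_eq_dotProduct_fibreGrad _ _ _

theorem fibreGrad_comp_fibredMap_eventuallyEq [Finite ι] [Fintype κ] [DecidableEq κ]
    {φ : E' × (κ → 𝕜) → 𝕜} {x : E → E'} {θ : E × (ι → 𝕜) → κ → 𝕜} {w : E × (ι → 𝕜)}
    (hφ : ∀ᶠ p in 𝓝 (fibredMap x θ w), DifferentiableAt 𝕜 φ p)
    (hx : ∀ᶠ y in 𝓝 w.1, DifferentiableAt 𝕜 x y) (hθ : ∀ᶠ q in 𝓝 w, DifferentiableAt 𝕜 θ q) :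
    fibreGrad 𝕜 (φ ∘ fibredMap x θ) =ᶠ[𝓝 w]
      fun q => (fibreJacobian 𝕜 θ q)ᵀ *ᵥ fibreGrad 𝕜 φ (fibredMap x θ q) := by
  have := Fintype.ofFinite ι
  have hT : ContinuousAt (fibredMap x θ) w :=
    (hasFDerivAt_fibredMap hx.self_of_nhds hθ.self_of_nhds).continuousAt
  filter_upwards [hT.eventually hφ, continuousAt_fst.eventually hx, hθ] with q hφq hxq hθq
  exact fibreGrad_comp_fibredMap hφq hxq hθq

theorem det_fderiv_prodMk_mulVec_of_eq_zero [Fintype ι] [CompleteSpace 𝕜] [FiniteDimensional 𝕜 E]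
    {f : E × (ι → 𝕜) → E} {C : E × (ι → 𝕜) → Matrix ι ι 𝕜} {g : E × (ι → 𝕜) → ι → 𝕜}
    {w : E × (ι → 𝕜)} (hf : DifferentiableAt 𝕜 f w) (hC : ContinuousAt C w)
    (hg : DifferentiableAt 𝕜 g w) (hg0 : g w = 0) :
    (fderiv 𝕜 (fun q => (f q, C q *ᵥ g q)) w).det =
      (C w).det * (fderiv 𝕜 (fun q => (f q, g q)) w).det := by
  have factor : (fderiv 𝕜 (fun q => (f q, C q *ᵥ g q)) w).toLinearMap =
      LinearMap.prodMap LinearMap.id (C w).mulVecLin ∘ₗ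
        (fderiv 𝕜 (fun q => (f q, g q)) w).toLinearMap := by
    rw [(hf.hasFDerivAt.prodMk (hasFDerivAt_mulVec_of_eq_zero hC hg.hasFDerivAt hg0)).fderiv,
      (hf.hasFDerivAt.prodMk hg.hasFDerivAt).fderiv]
    rfl
  rw [ContinuousLinearMap.det, factor, LinearMap.det_comp, LinearMap.det_prodMap,
    LinearMap.det_id, one_mul, ← toLin'_apply', LinearMap.det_toLin', ContinuousLinearMap.det]

theorem stmt_16_general [Fintype ι] [CompleteSpace 𝕜] [FiniteDimensional 𝕜 E]
    {φ : E × (ι → 𝕜) → 𝕜} {lam : E × (ι → 𝕜) → E} {x : E → E} {θ : E × (ι → 𝕜) → ι → 𝕜}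
    {w : E × (ι → 𝕜)} (hφ : ContDiffAt 𝕜 2 φ (fibredMap x θ w))
    (hlam : DifferentiableAt 𝕜 lam (fibredMap x θ w))
    (hx : ∀ᶠ y in 𝓝 w.1, DifferentiableAt 𝕜 x y) (hθ : ContDiffAt 𝕜 1 θ w)
    (hcrit : fibreGrad 𝕜 φ (fibredMap x θ w) = 0) :
    (fderiv 𝕜 (fun q => (lam (fibredMap x θ q), fibreGrad 𝕜 (φ ∘ fibredMap x θ) q)) w).det =
      (fibreJacobian 𝕜 θ w).det ^ 2 * (fderiv 𝕜 x w.1).det *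
        (fderiv 𝕜 (fun q => (lam q, fibreGrad 𝕜 φ q)) (fibredMap x θ w)).det := by
  have hφ_nhds : ∀ᶠ p in 𝓝 (fibredMap x θ w), DifferentiableAt 𝕜 φ p :=
    (hφ.eventually (by simp)).mono fun _ h => h.differentiableAt two_ne_zero
  have hθ_nhds : ∀ᶠ q in 𝓝 w, DifferentiableAt 𝕜 θ q :=
    (hθ.eventually (by simp)).mono fun _ h => h.differentiableAt one_ne_zero
  have hT : DifferentiableAt 𝕜 (fibredMap x θ) w :=
    (hasFDerivAt_fibredMap hx.self_of_nhds hθ_nhds.self_of_nhds).differentiableAt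
  have hgrad : DifferentiableAt 𝕜 (fibreGrad 𝕜 φ) (fibredMap x θ w) :=
    differentiableAt_fibreGrad ((hφ.fderiv_right (m := 1) le_rfl).differentiableAt one_ne_zero)
  have hjac : ContinuousAt (fun q => (fibreJacobian 𝕜 θ q)ᵀ) w :=
    continuous_id.matrix_transpose.continuousAt.comp
      (continuousAt_fibreJacobian (hθ.fderiv_right (m := 0) le_rfl).continuousAt)
  calc
    _ = (fderiv 𝕜 (fun q => (lam (fibredMap x θ q),
          (fibreJacobian 𝕜 θ q)ᵀ *ᵥ fibreGrad 𝕜 φ (fibredMap x θ q))) w).det :=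
      congrArg _ (EventuallyEq.rfl.prodMk
        (fibreGrad_comp_fibredMap_eventuallyEq hφ_nhds hx hθ_nhds)).fderiv_eq
    _ = (fibreJacobian 𝕜 θ w)ᵀ.det *
          (fderiv 𝕜 ((fun q => (lam q, fibreGrad 𝕜 φ q)) ∘ fibredMap x θ) w).det :=
      det_fderiv_prodMk_mulVec_of_eq_zero (hlam.comp w hT) hjac (hgrad.comp w hT) hcrit
    _ = _ := by
      rw [det_fderiv_comp (hlam.prodMk hgrad) hT,
        det_fderiv_fibredMap hx.self_of_nhds hθ_nhds.self_of_nhds, det_transpose]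
      ring

end Fibred

theorem det_jmat {d N : ℕ} (H : (Fin d → ℝ) × (Fin N → ℝ) → (Fin d → ℝ) × (Fin N → ℝ))
    (q : (Fin d → ℝ) × (Fin N → ℝ)) : (jmat H q).det = (fderiv ℝ H q).det := by
  let b := (Pi.basisFun ℝ (Fin d)).prod (Pi.basisFun ℝ (Fin N))
  have jmat_eq : jmat H q = LinearMap.toMatrix b b (fderiv ℝ H q) := by
    ext (i | i) (j | j) <;> simp [b, jmat, pcomp, pbasis, LinearMap.toMatrix_apply]
  rw [jmat_eq, LinearMap.det_toMatrix, ContinuousLinearMap.det]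

/-- Invariance of the symbol density under change of phase function: if
`φ̃(x̃,θ̃) = φ(x(x̃), θ(x̃,θ̃))` and `λ̃ = λ ∘ T`, then at every point of the critical set
`{∇_θφ ∘ T = 0}` the Jacobian determinants satisfy
`det D(λ̃, ∇_{θ̃}φ̃) = (det ∂θ/∂θ̃)² · det ∂x/∂x̃ · det D(λ, ∇_θφ) ∘ T`. -/
theorem stmt_16 (d N : ℕ) (hd : 1 ≤ d) (hN : 1 ≤ N)
    (U : Set ((Fin d → ℝ) × (Fin N → ℝ))) (hU : IsOpen U)
    (V : Set (Fin d → ℝ)) (hV : IsOpen V)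
    (W : Set ((Fin d → ℝ) × (Fin N → ℝ))) (hW : IsOpen W)
    (φ : (Fin d → ℝ) × (Fin N → ℝ) → ℝ) (hφ : ContDiffOn ℝ 2 φ U)
    (lam : (Fin d → ℝ) × (Fin N → ℝ) → Fin d → ℝ) (hlam : ContDiffOn ℝ 1 lam U)
    (x : (Fin d → ℝ) → Fin d → ℝ) (hx : ContDiffOn ℝ 1 x V)
    (θ : (Fin d → ℝ) × (Fin N → ℝ) → Fin N → ℝ) (hθ : ContDiffOn ℝ 1 θ W)
    (T : (Fin d → ℝ) × (Fin N → ℝ) → (Fin d → ℝ) × (Fin N → ℝ))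
    (hT : ∀ w, T w = (x w.1, θ w))
    (hmem : ∀ w ∈ W, w.1 ∈ V ∧ T w ∈ U) :
    ∀ w ∈ W,
      (∀ j : Fin N, fderiv ℝ φ (T w) ((0 : Fin d → ℝ), Pi.single j (1 : ℝ)) = 0) →
      (jmat (fun q => (lam (T q), fun j => fderiv ℝ (φ ∘ T) q (0, Pi.single j 1))) w).det
        = ((Matrix.of fun j j' : Fin N =>
              fderiv ℝ θ w ((0 : Fin d → ℝ), Pi.single j' (1 : ℝ)) j).det) ^ 2 *
          (Matrix.of fun i i' : Fin d =>
              fderiv ℝ x w.1 (Pi.single i' (1 : ℝ)) i).det *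
          (jmat (fun q => (lam q, fun j => fderiv ℝ φ q (0, Pi.single j 1))) (T w)).det := by
  obtain rfl : T = fibredMap x θ := funext hT
  intro w hw hcrit
  obtain ⟨hwV, hTw⟩ := hmem w hw
  have hx_nhds : ∀ᶠ y in 𝓝 w.1, DifferentiableAt ℝ x y :=
    (hx.differentiableOn one_ne_zero).eventually_differentiableAt (hV.mem_nhds hwV)
  have det_x : (fderiv ℝ x w.1).det =
      (Matrix.of fun i i' : Fin d => fderiv ℝ x w.1 (Pi.single i' (1 : ℝ)) i).det :=
    (LinearMap.det_toMatrix' _).symm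
  rw [det_jmat, det_jmat, ← det_x]
  exact stmt_16_general (hφ.contDiffAt (hU.mem_nhds hTw))
    ((hlam.contDiffAt (hU.mem_nhds hTw)).differentiableAt one_ne_zero) hx_nhds
    (hθ.contDiffAt (hW.mem_nhds hw)) (funext hcrit)
end
end
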